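/- Assume the Riemann Hypothesis. There is an absolute constant C such that for all x ≥ 1 and all real t one has | 2 x^{1/2 − it} ∑_γ x^{iγ}/(1 + (t − γ)²) + ∑_{n=1}^∞ Λ(n) a_n(x) n^{−it} − 2 x^{1−it}/((1/2 + it)(3/2 − it)) − x^{−1/2} log(|t| + 2) | ≤ C ( x^{−1/2} + x^{−2}/(|t| + 2) ), where the first sum runs over all ordinates γ of the non-trivial zeros of ζ counted with multiplicity. -/

import Mathlib

open Complex Filter MeasureTheory Real Set

noncomputable section

/-- A non-trivial zero of the Riemann zeta function. -/
def ZetaNontrivZero (ρ : ℂ) : Prop := riemannZeta ρ = 0 ∧ 0 < ρ.re ∧ ρ.re < 1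

/-- The multiplicity of `ρ` as a zero of `ζ`. -/
def zetaMult (ρ : ℂ) : ℕ := sInf {n : ℕ | iteratedDeriv n riemannZeta ρ ≠ 0}

/-- The weight `a_n(x) = min((n/x)^{1/2}, (x/n)^{3/2})`. -/
def aWeight (n : ℕ) (x : ℝ) : ℝ := min (((n : ℝ) / x) ^ ((1 : ℝ) / 2)) ((x / n) ^ ((3 : ℝ) / 2))

/-!
Hadamard's partial fractions for the entire function `(s - 1) ζ(s)`, taken at the two points `a` and
`b`, express `ζ'/ζ(a) + 1/(a - 1) - ζ'/ζ(b) - 1/(b - 1)` as the sum over all zeros `ρ` of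
`(a - b) / ((a - ρ) (ρ - b))`. Take `a = s` on the line `re s = 5/4` and `b = -1/2 + it`, and
multiply by the kernel `2 / ((3/2 + it - s) (s + 1/2 - it))`. Every term is then the Fourier
transform of a two-sided exponential: `-ζ'/ζ(s)` expands over the prime powers and yields the
weights `a_n(x)`, while a zero `ρ` yields `x^(ρ - it)`. Uniqueness of the Fourier transform turns
this into an exact formula, in which the point `b` contributes `ζ'/ζ(-1/2 + it) x^(-1/2)`.
By the functional equation and a digamma estimate, `ζ'/ζ(-1/2 + it) = -log (|t| + 2) + O(1)`; the
trivial zeros contribute a telescoping sum of size `x^(-2) / (|t| + 2)`.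
-/

open scoped Topology

section HadamardPartialFractions

open Metric

variable {f : ℂ → ℂ} {z₀ : ℂ}

/-- The difference `1 / (a - p) - 1 / (b - p)` over a common denominator: the partial fraction
attached to a pole `p` when a logarithmic derivative is compared at the points `a` and `b`. -/
def poleKernel (a b p : ℂ) : ℂ := (a - b) / ((a - p) * (p - b))

lemma poleKernel_eq_sub {a b p : ℂ} (ha : a ≠ p) (hb : b ≠ p) :
    poleKernel a b p = 1 / (a - p) - 1 / (b - p) := by
  have := sub_ne_zero.2 ha
  have := sub_ne_zero.2 hb
  have := sub_ne_zero.2 hb.symm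
  rw [poleKernel]
  field_simp
  ring

lemma analyticOrderAt_ne_top_of_differentiable (hf : Differentiable ℂ f) (h0 : f z₀ ≠ 0) (ρ : ℂ) :
    analyticOrderAt f ρ ≠ ⊤ := fun h ↦
  h0 <| AnalyticOnNhd.eqOn_zero_of_preconnected_of_eventuallyEq_zero
    (fun z _ ↦ hf.analyticAt z) isPreconnected_univ (mem_univ ρ) (analyticOrderAt_eq_top.1 h)
    (mem_univ z₀)

lemma exists_eq_pow_mul_of_analyticOrderAt_ne_top (hf : Differentiable ℂ f) {ρ : ℂ}
    (hρ : analyticOrderAt f ρ ≠ ⊤) :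
    ∃ g : ℂ → ℂ, Differentiable ℂ g ∧ g ρ ≠ 0 ∧
      ∀ z, f z = (z - ρ) ^ analyticOrderNatAt f ρ * g z := by
  obtain ⟨p, hp⟩ := hf.analyticAt ρ
  have hp0 : p ≠ 0 := fun h ↦ hρ (analyticOrderAt_eq_top.2 (hp.locally_zero_iff.2 h))
  set g := (Function.swap dslope ρ)^[p.order] f
  have hg : Differentiable ℂ g := by
    refine Function.Iterate.rec (Differentiable ℂ ·) hf (fun h hh ↦ ?_) _
    rw [← differentiableOn_univ] at hh ⊢
    exact (Complex.differentiableOn_dslope univ_mem).2 hh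
  have hgρ : g ρ ≠ 0 := hp.iterate_dslope_fslope_ne_zero hp0
  have hfg : ∀ z, f z = (z - ρ) ^ p.order * g z := hp.eq_pow_order_mul_iterate_dslope
  have horder : analyticOrderNatAt f ρ = p.order := by
    rw [analyticOrderNatAt, (hf.analyticAt ρ).analyticOrderAt_eq_natCast.2
      ⟨g, hg.analyticAt ρ, hgρ, .of_forall hfg⟩, ENat.toNat_natCast]
  exact ⟨g, hg, hgρ, by rwa [horder]⟩

lemma exists_eq_prod_pow_mul (hf : Differentiable ℂ f) (hord : ∀ ρ, analyticOrderAt f ρ ≠ ⊤)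
    (S : Finset ℂ) :
    ∃ g : ℂ → ℂ, Differentiable ℂ g ∧ (∀ ρ ∈ S, g ρ ≠ 0) ∧
      ∀ z, f z = (∏ ρ ∈ S, (z - ρ) ^ analyticOrderNatAt f ρ) * g z := by
  classical
  induction S using Finset.induction_on with
  | empty => exact ⟨f, hf, by simp, by simp⟩
  | insert a S ha ih =>
    obtain ⟨g, hg, hgS, hfg⟩ := ih
    set P : ℂ → ℂ := fun z ↦ ∏ ρ ∈ S, (z - ρ) ^ analyticOrderNatAt f ρ
    have hPan : AnalyticAt ℂ P a := Differentiable.analyticAt (by fun_prop) a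
    have hPa : P a ≠ 0 := Finset.prod_ne_zero_iff.2 fun ρ hρ ↦
      pow_ne_zero _ (sub_ne_zero.2 fun h ↦ ha (h ▸ hρ))
    have horder : analyticOrderAt f a = analyticOrderAt g a := by
      rw [show f = P * g from funext hfg, analyticOrderAt_mul hPan (hg.analyticAt a),
        hPan.analyticOrderAt_eq_zero.2 hPa, zero_add]
    obtain ⟨k, hk, hka, hgk⟩ :=
      exists_eq_pow_mul_of_analyticOrderAt_ne_top hg (horder ▸ hord a)
    refine ⟨k, hk, fun ρ hρ ↦ ?_, fun z ↦ ?_⟩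
    · rcases Finset.mem_insert.1 hρ with rfl | h
      · exact hka
      · exact right_ne_zero_of_mul (hgk ρ ▸ hgS ρ h)
    · rw [Finset.prod_insert ha, hfg, hgk, analyticOrderNatAt, analyticOrderNatAt, horder]
      ring

lemma logDeriv_prod_pow_mul {g : ℂ → ℂ} (hg : Differentiable ℂ g) (S : Finset ℂ) (m : ℂ → ℕ)
    (hfg : ∀ z, f z = (∏ ρ ∈ S, (z - ρ) ^ m ρ) * g z) {z : ℂ} (hzS : z ∉ S) (hgz : g z ≠ 0) :
    logDeriv f z = ∑ ρ ∈ S, (m ρ : ℂ) * (1 / (z - ρ)) + logDeriv g z := by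
  have hpow : ∀ ρ ∈ S, (z - ρ) ^ m ρ ≠ 0 := fun ρ hρ ↦
    pow_ne_zero _ (sub_ne_zero.2 fun h ↦ hzS (h ▸ hρ))
  rw [show f = fun z ↦ (∏ ρ ∈ S, (z - ρ) ^ m ρ) * g z from funext hfg,
    logDeriv_mul z (Finset.prod_ne_zero_iff.2 hpow) hgz (by fun_prop) (hg z),
    logDeriv_prod (f := fun ρ z ↦ (z - ρ) ^ m ρ) hpow fun ρ _ ↦ by fun_prop]
  congr 1
  refine Finset.sum_congr rfl fun ρ _ ↦ ?_
  rw [logDeriv_fun_pow (by fun_prop)]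
  simp [logDeriv_apply]

lemma exists_eq_mul_exp_of_ne_zero_on_ball {g : ℂ → ℂ} {R : ℝ} (hR : 0 < R)
    (hg : DifferentiableOn ℂ g (ball z₀ R)) (hne : ∀ z ∈ ball z₀ R, g z ≠ 0) :
    ∃ h : ℂ → ℂ, h z₀ = 0 ∧ (∀ z ∈ ball z₀ R, HasDerivAt h (logDeriv g z) z) ∧
      ∀ z ∈ ball z₀ R, g z = g z₀ * cexp (h z) := by
  have hgd (z) (hz : z ∈ ball z₀ R) : HasDerivAt g (deriv g z) z :=
    (hg.differentiableAt (isOpen_ball.mem_nhds hz)).hasDerivAt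
  have hz₀ : z₀ ∈ ball z₀ R := mem_ball_self hR
  obtain ⟨h, h0, hh⟩ :=
    ((hg.deriv isOpen_ball).div hg hne).isExactOn_ball.with_val_at z₀ 0
  have hderiv (z) (hz : z ∈ ball z₀ R) : HasDerivAt (fun w ↦ g w * cexp (-h w)) 0 z := by
    refine ((hgd z hz).mul (hh z hz).neg.cexp).congr_deriv ?_
    have := hne z hz
    simp only [Pi.div_apply]
    field_simp
    ring
  refine ⟨h, h0, hh, fun z hz ↦ ?_⟩
  have hconst : g z * cexp (-h z) = g z₀ := by
    have := isOpen_ball.eqOn_of_deriv_eq (isConnected_ball hR).isPreconnected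
      (f := fun w ↦ g w * cexp (-h w)) (g := fun _ ↦ g z₀)
      (fun w hw ↦ (hderiv w hw).differentiableAt.differentiableWithinAt)
      (differentiableOn_const _) (fun w hw ↦ by simp [(hderiv w hw).deriv]) hz₀ (by simp [h0])
    exact this hz
  rw [← hconst, mul_assoc, ← Complex.exp_add, neg_add_cancel, Complex.exp_zero, mul_one]

lemma norm_deriv_sub_deriv_le {h : ℂ → ℂ} {r C : ℝ} (hh : DifferentiableOn ℂ h (ball z₀ (2 * r)))
    (hC : ∀ z ∈ ball z₀ (2 * r), ‖h z‖ ≤ C) {z : ℂ} (hz : z ∈ ball z₀ r) :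
    ‖deriv h z - deriv h z₀‖ ≤ 2 * C / r ^ 2 * ‖z - z₀‖ := by
  have hr : 0 < r := dist_nonneg.trans_lt hz
  have hsub {w : ℂ} (hw : w ∈ ball z₀ r) : closedBall w r ⊆ ball z₀ (2 * r) := fun v hv ↦
    mem_ball.2 (by linarith [dist_triangle v w z₀, mem_ball.1 hw, mem_closedBall.1 hv])
  have hderiv2 (w) (hw : w ∈ ball z₀ r) : ‖deriv (deriv h) w‖ ≤ 2 * C / r ^ 2 := by
    have := norm_iteratedDeriv_le_of_forall_mem_sphere_norm_le 2 hr
      ((hh.mono ((closure_ball w hr.ne').trans_subset (hsub hw))).diffContOnCl)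
      fun v hv ↦ hC v (hsub hw (sphere_subset_closedBall hv))
    simpa [iteratedDeriv_succ, iteratedDeriv_zero] using this
  refine (convex_ball z₀ r).norm_image_sub_le_of_norm_deriv_le (𝕜 := ℂ) (fun w hw ↦ ?_) hderiv2
    (mem_ball_self hr) hz
  exact (hh.deriv isOpen_ball).differentiableAt
    (isOpen_ball.mem_nhds (ball_subset_ball (by linarith) hw))

lemma norm_le_of_re_le_on_ball {h : ℂ → ℂ} {R M : ℝ} (hM : 0 < M)
    (hh : DifferentiableOn ℂ h (ball z₀ R)) (h0 : h z₀ = 0) (hre : ∀ z ∈ ball z₀ R, (h z).re ≤ M)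
    {z : ℂ} (hz : z ∈ ball z₀ (R / 2)) : ‖h z‖ ≤ 2 * M := by
  have hz' : ‖z - z₀‖ < R / 2 := mem_ball_iff_norm.1 hz
  have hR : 0 < R := by linarith [norm_nonneg (z - z₀)]
  have hmaps : MapsTo (· + z₀) (ball 0 R) (ball z₀ R) := fun v hv ↦ by
    simpa [dist_eq_norm] using hv
  have := Complex.borelCaratheodory_zero (f := fun v ↦ h (v + z₀)) (z := z - z₀) hM
    (hh.comp (by fun_prop) hmaps) (fun v hv ↦ hre _ (hmaps hv)) hR
    (by rw [mem_ball_zero_iff]; linarith) (by simp [h0])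
  rw [sub_add_cancel] at this
  refine this.trans ((div_le_iff₀ (by linarith)).2 ?_)
  nlinarith

lemma norm_logDeriv_sub_logDeriv_le {g : ℂ → ℂ} {r M : ℝ} (hM : 0 < M)
    (hg : DifferentiableOn ℂ g (ball z₀ (4 * r))) (hne : ∀ z ∈ ball z₀ (4 * r), g z ≠ 0)
    (hb : ∀ z ∈ ball z₀ (4 * r), ‖g z‖ ≤ ‖g z₀‖ * Real.exp M) {z : ℂ} (hz : z ∈ ball z₀ r) :
    ‖logDeriv g z - logDeriv g z₀‖ ≤ 4 * M / r ^ 2 * ‖z - z₀‖ := by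
  have hr : 0 < r := dist_nonneg.trans_lt hz
  have hz₀ : z₀ ∈ ball z₀ (4 * r) := mem_ball_self (by positivity)
  obtain ⟨h, h0, hh, hexp⟩ := exists_eq_mul_exp_of_ne_zero_on_ball (by positivity) hg hne
  have hhd : DifferentiableOn ℂ h (ball z₀ (4 * r)) := fun w hw ↦
    (hh w hw).differentiableAt.differentiableWithinAt
  have hre (w) (hw : w ∈ ball z₀ (4 * r)) : (h w).re ≤ M := by
    have h1 := hb w hw
    rw [hexp w hw, norm_mul, Complex.norm_exp] at h1
    exact Real.exp_le_exp.1 (le_of_mul_le_mul_left h1 (norm_pos_iff.2 (hne _ hz₀)))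
  have hC (w) (hw : w ∈ ball z₀ (2 * r)) : ‖h w‖ ≤ 2 * M :=
    norm_le_of_re_le_on_ball hM hhd h0 hre (by rwa [show 4 * r / 2 = 2 * r by ring])
  rw [← (hh z (ball_subset_ball (by linarith) hz)).deriv, ← (hh z₀ hz₀).deriv]
  convert norm_deriv_sub_deriv_le (hhd.mono (ball_subset_ball (by linarith))) hC hz using 3
  ring

lemma norm_le_on_ball_of_eq_prod_pow_mul {g : ℂ → ℂ} (hg : Differentiable ℂ g) (S : Finset ℂ)
    (m : ℂ → ℕ) (hfg : ∀ z, f z = (∏ ρ ∈ S, (z - ρ) ^ m ρ) * g z) (h0 : f z₀ ≠ 0) {r M : ℝ}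
    (hr : 0 < r) (hS : ∀ ρ ∈ S, ρ ∈ closedBall z₀ (4 * r))
    (hb : ∀ z ∈ sphere z₀ (16 * r), ‖f z‖ ≤ ‖f z₀‖ * Real.exp M) {z : ℂ}
    (hz : z ∈ ball z₀ (4 * r)) : ‖g z‖ ≤ ‖g z₀‖ * Real.exp M := by
  have hsphere (w) (hw : w ∈ sphere z₀ (16 * r)) : ‖g w‖ ≤ ‖g z₀‖ * Real.exp M := by
    have h1 := hb w hw
    rw [hfg w, hfg z₀, norm_mul, norm_mul, norm_prod, norm_prod] at h1
    have hpos : 0 < ∏ ρ ∈ S, ‖(z₀ - ρ) ^ m ρ‖ := by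
      rw [← norm_prod]
      exact norm_pos_iff.2 (left_ne_zero_of_mul (hfg z₀ ▸ h0))
    -- Zeros in the small ball are farther from the large sphere than from the centre.
    have hle : ∏ ρ ∈ S, ‖(z₀ - ρ) ^ m ρ‖ ≤ ∏ ρ ∈ S, ‖(w - ρ) ^ m ρ‖ := by
      refine Finset.prod_le_prod (fun _ _ ↦ norm_nonneg _) fun ρ hρ ↦ ?_
      rw [norm_pow, norm_pow, ← dist_eq_norm, ← dist_eq_norm, dist_comm z₀]
      have := mem_closedBall.1 (hS ρ hρ)
      gcongr
      linarith [dist_triangle w ρ z₀, mem_sphere.1 hw]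
    refine le_of_mul_le_mul_left ?_ hpos
    calc _ ≤ _ := mul_le_mul_of_nonneg_right hle (norm_nonneg _)
      _ ≤ _ := h1
      _ = _ := by ring
  exact Complex.norm_le_of_forall_mem_frontier_norm_le isBounded_ball hg.diffContOnCl
    (frontier_ball z₀ (by positivity : 16 * r ≠ 0) ▸ hsphere)
    (subset_closure (ball_subset_ball (by linarith) hz))

lemma norm_logDeriv_sub_sum_poleKernel_le (hf : Differentiable ℂ f) (h0 : f z₀ ≠ 0) {r M : ℝ}
    (hM : 0 < M) (hb : ∀ z ∈ sphere z₀ (16 * r), ‖f z‖ ≤ ‖f z₀‖ * Real.exp M) {S : Finset ℂ}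
    (hS : ∀ ρ, ρ ∈ S ↔ f ρ = 0 ∧ ρ ∈ closedBall z₀ (4 * r)) {z : ℂ} (hz : z ∈ ball z₀ r)
    (hfz : f z ≠ 0) :
    ‖logDeriv f z - logDeriv f z₀ - ∑ ρ ∈ S, (analyticOrderNatAt f ρ : ℂ) * poleKernel z z₀ ρ‖
      ≤ 4 * M / r ^ 2 * ‖z - z₀‖ := by
  have hr : 0 < r := dist_nonneg.trans_lt hz
  obtain ⟨g, hg, hgS, hfg⟩ :=
    exists_eq_prod_pow_mul hf (analyticOrderAt_ne_top_of_differentiable hf h0) S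
  have hnotMem {w : ℂ} (hw : f w ≠ 0) : w ∉ S := fun h ↦ hw ((hS w).1 h).1
  have hld {w : ℂ} (hw : f w ≠ 0) := logDeriv_prod_pow_mul hg S _ hfg (hnotMem hw)
    (right_ne_zero_of_mul (hfg w ▸ hw))
  have hne (w) (hw : w ∈ ball z₀ (4 * r)) : g w ≠ 0 := fun h ↦
    hgS w ((hS w).2 ⟨by rw [hfg, h, mul_zero], ball_subset_closedBall hw⟩) h
  convert norm_logDeriv_sub_logDeriv_le hM hg.differentiableOn hne
    (fun w ↦ norm_le_on_ball_of_eq_prod_pow_mul hg S _ hfg h0 hr (fun ρ hρ ↦ ((hS ρ).1 hρ).2) hb)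
    hz using 2
  have hkernel (ρ) (hρ : ρ ∈ S) : (analyticOrderNatAt f ρ : ℂ) * poleKernel z z₀ ρ =
      analyticOrderNatAt f ρ * (1 / (z - ρ)) - analyticOrderNatAt f ρ * (1 / (z₀ - ρ)) := by
    have hzρ : z ≠ ρ := fun h ↦ hnotMem hfz (h ▸ hρ)
    have hz₀ρ : z₀ ≠ ρ := fun h ↦ hnotMem h0 (h ▸ hρ)
    rw [poleKernel_eq_sub hzρ hz₀ρ, mul_sub]
  rw [hld hfz, hld h0, Finset.sum_congr rfl hkernel, Finset.sum_sub_distrib]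
  ring

theorem tendsto_sum_poleKernel_of_norm_le_exp_rpow (hf : Differentiable ℂ f) {A q : ℝ}
    (hq0 : 0 ≤ q) (hq2 : q < 2) (hb : ∀ z, ‖f z‖ ≤ Real.exp (A * (1 + ‖z‖) ^ q)) (h0 : f z₀ ≠ 0)
    {S : ℕ → Finset ℂ} (hS : ∀ n ρ, ρ ∈ S n ↔ f ρ = 0 ∧ ρ ∈ closedBall z₀ n) {z : ℂ}
    (hfz : f z ≠ 0) :
    Tendsto (fun n ↦ ∑ ρ ∈ S n, (analyticOrderNatAt f ρ : ℂ) * poleKernel z z₀ ρ) atTop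
      (𝓝 (logDeriv f z - logDeriv f z₀)) := by
  set D : ℝ := 5 + ‖z₀‖
  set B : ℝ := |Real.log ‖f z₀‖| + 1
  set M : ℕ → ℝ := fun n ↦ |A| * (D * n) ^ q + B with hM
  have hlim : Tendsto (fun n : ℕ ↦ 64 * ‖z - z₀‖ * (|A| * D ^ q * (n : ℝ) ^ (-(2 - q))
      + B * (n : ℝ) ^ (-2 : ℝ))) atTop (𝓝 0) := by
    have h1 := (tendsto_rpow_neg_atTop (sub_pos.2 hq2)).comp tendsto_natCast_atTop_atTop
    have h2 := (tendsto_rpow_neg_atTop (y := 2) two_pos).comp tendsto_natCast_atTop_atTop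
    simpa using ((h1.const_mul (|A| * D ^ q)).add (h2.const_mul B)).const_mul (64 * ‖z - z₀‖)
  rw [tendsto_iff_norm_sub_tendsto_zero]
  refine squeeze_zero' (.of_forall fun _ ↦ norm_nonneg _) ?_ hlim
  filter_upwards [eventually_gt_atTop ⌈4 * ‖z - z₀‖⌉₊] with n hn
  have hn0 : (1 : ℝ) ≤ n := by exact_mod_cast (Nat.zero_le _).trans_lt hn
  have hgrowth (w) (hw : w ∈ sphere z₀ (16 * ((n : ℝ) / 4))) :
      ‖f w‖ ≤ ‖f z₀‖ * Real.exp (M n) := by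
    have hw' : 1 + ‖w‖ ≤ D * n := by
      have : ‖w‖ ≤ ‖w - z₀‖ + ‖z₀‖ := norm_le_norm_sub_add w z₀
      rw [mem_sphere_iff_norm.1 hw] at this
      nlinarith [norm_nonneg z₀]
    refine (hb w).trans ?_
    rw [← Real.exp_log (norm_pos_iff.2 h0), ← Real.exp_add, Real.exp_le_exp]
    have : A * (1 + ‖w‖) ^ q ≤ |A| * (D * n) ^ q := by
      gcongr
      exact le_abs_self A
    linarith [neg_abs_le (Real.log ‖f z₀‖)]
  rw [norm_sub_rev]
  refine (norm_logDeriv_sub_sum_poleKernel_le hf h0 (by positivity) hgrowth (S := S n) (by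
    simpa [mul_div_cancel₀] using hS n) (mem_ball_iff_norm.2 (by
      linarith [Nat.lt_of_ceil_lt hn])) hfz).trans_eq ?_
  have hn1 : (0 : ℝ) < n := by linarith
  simp only [hM]
  rw [neg_sub, Real.rpow_sub hn1, Real.mul_rpow (by positivity) hn1.le, Real.rpow_neg hn1.le,
    Real.rpow_two]
  field_simp
  ring

end HadamardPartialFractions

section ZetaGrowth

/-- The fractional part restricted to `(1, ∞)`; its Mellin transform continues `ζ` to
`0 < re s`. -/
def fractTail : ℝ → ℂ := (Ioi (1 : ℝ)).indicator fun u ↦ ((Int.fract u : ℝ) : ℂ)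

lemma norm_fract_le_one (u : ℝ) : ‖((Int.fract u : ℝ) : ℂ)‖ ≤ 1 := by
  rw [Complex.norm_real, Real.norm_eq_abs, Int.abs_fract]
  exact (Int.fract_lt_one u).le

lemma norm_fractTail_le_one (u : ℝ) : ‖fractTail u‖ ≤ 1 :=
  (norm_indicator_le_norm_self _ u).trans (norm_fract_le_one u)

lemma measurable_fractTail : Measurable fractTail :=
  (Complex.measurable_ofReal.comp measurable_fract).indicator measurableSet_Ioi

lemma differentiableAt_mellin_fractTail {s : ℂ} (hs : s.re < 0) :
    DifferentiableAt ℂ (mellin fractTail) s := by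
  have hbound (u : ℝ) : ‖fractTail u‖ ≤ 1 * ‖(1 : ℝ)‖ := by
    simpa using norm_fractTail_le_one u
  refine mellin_differentiableAt_of_isBigO_rpow (a := 0) (b := s.re - 1) ?_ ?_ (by simpa using hs)
    ?_ (by linarith)
  · refine ((locallyIntegrable_const (1 : ℝ)).mono measurable_fractTail.aestronglyMeasurable
      (.of_forall fun u ↦ ?_)).locallyIntegrableOn _
    simpa using hbound u
  · simpa using Asymptotics.IsBigO.of_bound 1 (.of_forall hbound)
  · refine Asymptotics.IsBigO.of_bound 1 ?_
    filter_upwards [mem_nhdsWithin_of_mem_nhds (Iio_mem_nhds one_pos)] with u hu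
    have : fractTail u = 0 := indicator_of_notMem (notMem_Ioi.2 (mem_Iio.1 hu).le) _
    simp [this]

lemma mellin_fractTail_neg (s : ℂ) :
    mellin fractTail (-s) =
      ∫ u in Ioi (1 : ℝ), ((Int.fract u : ℝ) : ℂ) * (u : ℂ) ^ (-(s + 1)) := by
  have hindicator (u : ℝ) : (u : ℂ) ^ (-s - 1) • fractTail u =
      (Ioi (1 : ℝ)).indicator
        (fun u : ℝ ↦ ((Int.fract u : ℝ) : ℂ) * (u : ℂ) ^ (-(s + 1))) u := by
    by_cases h : u ∈ Ioi (1 : ℝ)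
    · rw [fractTail, indicator_of_mem h, indicator_of_mem h, smul_eq_mul, mul_comm, neg_add']
    · rw [fractTail, indicator_of_notMem h, indicator_of_notMem h, smul_zero]
  rw [mellin, setIntegral_congr_fun measurableSet_Ioi fun u _ ↦ hindicator u,
    setIntegral_indicator measurableSet_Ioi, Ioi_inter_Ioi, max_eq_right zero_le_one]

lemma norm_fract_mul_cpow_le (s : ℂ) {u : ℝ} (hu : 1 < u) :
    ‖((Int.fract u : ℝ) : ℂ) * (u : ℂ) ^ (-(s + 1))‖ ≤ u ^ (-(s.re + 1)) := by
  have hu0 : 0 < u := one_pos.trans hu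
  rw [norm_mul, Complex.norm_cpow_eq_rpow_re_of_pos hu0]
  simpa using mul_le_of_le_one_left (by positivity) (norm_fract_le_one u)

lemma norm_mellin_fractTail_neg_le {s : ℂ} (hs : 0 < s.re) :
    ‖mellin fractTail (-s)‖ ≤ 1 / s.re := by
  have hint : ∫ u in Ioi (1 : ℝ), u ^ (-(s.re + 1)) = 1 / s.re := by
    rw [integral_Ioi_rpow_of_lt (by linarith) one_pos]
    simp
  rw [mellin_fractTail_neg, ← hint]
  refine norm_integral_le_of_norm_le (integrableOn_Ioi_rpow_of_lt (by linarith) one_pos) ?_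
  filter_upwards [ae_restrict_mem measurableSet_Ioi] with u hu
  exact norm_fract_mul_cpow_le s hu

lemma integrableOn_fract_mul_cpow {s : ℂ} (hs : 0 < s.re) :
    IntegrableOn (fun u : ℝ ↦ ((Int.fract u : ℝ) : ℂ) * (u : ℂ) ^ (-(s + 1))) (Ioi 1) := by
  refine Integrable.mono' (integrableOn_Ioi_rpow_of_lt (a := -(s.re + 1)) (by linarith) one_pos)
    (.mul (Complex.measurable_ofReal.comp measurable_fract).aestronglyMeasurable ?_) ?_
  · refine ContinuousOn.aestronglyMeasurable (fun u hu ↦ ?_) measurableSet_Ioi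
    exact (continuousAt_ofReal_cpow_const _ _
      (.inr (one_pos.trans hu).ne')).continuousWithinAt
  · filter_upwards [ae_restrict_mem measurableSet_Ioi] with u hu
    exact norm_fract_mul_cpow_le s hu

lemma integral_floor_mul_cpow {s : ℂ} (hs : 1 < s.re) :
    ∫ u in Ioi (1 : ℝ), (⌊u⌋₊ : ℂ) * (u : ℂ) ^ (-(s + 1)) =
      1 / (s - 1) - mellin fractTail (-s) := by
  have hpow : ∫ u in Ioi (1 : ℝ), (u : ℂ) ^ (-s) = 1 / (s - 1) := by
    rw [integral_Ioi_cpow_of_lt (by simpa using hs) one_pos, ofReal_one, one_cpow,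
      show -s + 1 = -(s - 1) by ring, neg_div_neg_eq]
  rw [mellin_fractTail_neg, ← hpow, ← integral_sub
    (integrableOn_Ioi_cpow_of_lt (by simpa using hs) one_pos)
    (integrableOn_fract_mul_cpow (by linarith))]
  refine setIntegral_congr_fun measurableSet_Ioi fun u hu ↦ ?_
  have hu0 : 0 < u := one_pos.trans hu
  have hfloor : (⌊u⌋₊ : ℂ) = u - ((Int.fract u : ℝ) : ℂ) := by
    rw [← Complex.ofReal_sub, Int.self_sub_fract, ← natCast_floor_eq_intCast_floor hu0.le,
      ofReal_natCast]
  have hcpow : (u : ℂ) ^ (-s) = u * (u : ℂ) ^ (-(s + 1)) := by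
    rw [show -s = 1 + -(s + 1) by ring, Complex.cpow_add _ _ (ofReal_ne_zero.2 hu0.ne'),
      Complex.cpow_one]
  simp only [hfloor, hcpow, sub_mul]

lemma riemannZeta₁_eq_of_one_lt_re {s : ℂ} (hs : 1 < s.re) :
    riemannZeta₁ s = s - s * (s - 1) * mellin fractTail (-s) := by
  have hs1 : s ≠ 1 := fun h ↦ by simp [h] at hs
  have hzeta : riemannZeta s = s * ∫ u in Ioi (1 : ℝ), (⌊u⌋₊ : ℂ) * (u : ℂ) ^ (-(s + 1)) := by
    rw [← LSeries_one_eq_riemannZeta hs, LSeries_eq_mul_integral' (r := 1) 1 zero_le_one hs]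
    · simp
    · simpa using Asymptotics.isBigO_refl _ _
  rw [integral_floor_mul_cpow hs, riemannZeta_eq_inv_sub_mul hs1] at hzeta
  have := sub_ne_zero.2 hs1
  field_simp at hzeta
  linear_combination hzeta

lemma riemannZeta₁_eq_of_re_pos {s : ℂ} (hs : 0 < s.re) :
    riemannZeta₁ s = s - s * (s - 1) * mellin fractTail (-s) := by
  have hopen (a : ℝ) : IsOpen {s : ℂ | a < s.re} := isOpen_lt continuous_const continuous_re
  have hright : AnalyticOnNhd ℂ (fun s ↦ s - s * (s - 1) * mellin fractTail (-s))
      {s : ℂ | 0 < s.re} := by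
    refine DifferentiableOn.analyticOnNhd (fun z hz ↦ ?_) (hopen 0)
    have : DifferentiableAt ℂ (fun s ↦ mellin fractTail (-s)) z :=
      (differentiableAt_mellin_fractTail (by simpa using hz)).comp z differentiableAt_id.neg
    exact DifferentiableAt.differentiableWithinAt (by fun_prop)
  refine AnalyticOnNhd.eqOn_of_preconnected_of_eventuallyEq
    (fun z _ ↦ differentiable_riemannZeta₁.analyticAt z) hright
    (convex_halfSpace_re_gt 0).isPreconnected (z₀ := 2) (by simp) ?_ hs
  filter_upwards [(hopen 1).mem_nhds (by simp : (1 : ℝ) < (2 : ℂ).re)] with z hz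
  exact riemannZeta₁_eq_of_one_lt_re hz

lemma norm_riemannZeta₁_le {s : ℂ} (hs : 1 / 2 ≤ s.re) :
    ‖riemannZeta₁ s‖ ≤ 3 * (1 + ‖s‖) ^ 2 := by
  have hmellin : ‖mellin fractTail (-s)‖ ≤ 2 :=
    (norm_mellin_fractTail_neg_le (by linarith)).trans
      ((div_le_iff₀ (by linarith)).2 (by linarith))
  have hsub : ‖s - 1‖ ≤ ‖s‖ + 1 := by simpa using norm_sub_le s 1
  rw [riemannZeta₁_eq_of_re_pos (by linarith)]
  calc _ ≤ ‖s‖ + ‖s‖ * ‖s - 1‖ * ‖mellin fractTail (-s)‖ := by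
        rw [← norm_mul, ← norm_mul]
        exact norm_sub_le _ _
    _ ≤ ‖s‖ + ‖s‖ * (‖s‖ + 1) * 2 := by gcongr
    _ ≤ _ := by nlinarith [norm_nonneg s]

lemma norm_Gamma_le {s : ℂ} (hs : 0 < s.re) : ‖Complex.Gamma s‖ ≤ Real.Gamma s.re := by
  rw [Complex.Gamma_eq_integral hs, Complex.GammaIntegral, Real.Gamma_eq_integral hs]
  refine norm_integral_le_of_norm_le (Real.GammaIntegral_convergent hs) ?_
  filter_upwards [ae_restrict_mem measurableSet_Ioi] with u hu
  rw [norm_mul, Complex.norm_cpow_eq_rpow_re_of_pos hu, Complex.norm_real]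
  simp

lemma Gamma_le_rpow_self {x : ℝ} (hx : 2 ≤ x) : Real.Gamma x ≤ x ^ x := by
  have hfloor : (⌊x⌋₊ : ℝ) ≤ x := Nat.floor_le (by linarith)
  have hlt := Nat.lt_floor_add_one x
  calc Real.Gamma x ≤ Real.Gamma (⌊x⌋₊ + 1) :=
        Real.Gamma_strictMonoOn_Ici.monotoneOn hx (hx.trans hlt.le) hlt.le
    _ = (⌊x⌋₊.factorial : ℝ) := Real.Gamma_nat_eq_factorial _
    _ ≤ (⌊x⌋₊ : ℝ) ^ ⌊x⌋₊ := by exact_mod_cast Nat.factorial_le_pow _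
    _ ≤ x ^ ⌊x⌋₊ := by gcongr
    _ = x ^ (⌊x⌋₊ : ℝ) := (Real.rpow_natCast _ _).symm
    _ ≤ x ^ x := Real.rpow_le_rpow_of_exponent_le (by linarith) hfloor

lemma rpow_self_le_exp {x : ℝ} (hx : 0 < x) : x ^ x ≤ Real.exp (2 * x ^ (3 / 2 : ℝ)) := by
  have hlog : Real.log x ≤ 2 * x ^ (1 / 2 : ℝ) :=
    (Real.log_le_rpow_div hx.le (ε := 1 / 2) (by norm_num)).trans_eq (by ring)
  rw [Real.rpow_def_of_pos hx, Real.exp_le_exp,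
    show (3 / 2 : ℝ) = 1 / 2 + 1 by norm_num, Real.rpow_add_one hx.ne']
  nlinarith

lemma Gamma_le_exp {x r : ℝ} (hx : 1 / 2 ≤ x) (hxr : x ≤ r) (hr : 1 ≤ r) :
    Real.Gamma x ≤ 2 * Real.exp (12 * r ^ (3 / 2 : ℝ)) := by
  have hrec : Real.Gamma (x + 2) = (x + 1) * (x * Real.Gamma x) := by
    rw [show x + 2 = x + 1 + 1 by ring, Real.Gamma_add_one (by linarith),
      Real.Gamma_add_one (by linarith)]
  have hshift : Real.Gamma x ≤ 2 * Real.Gamma (x + 2) := by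
    rw [hrec, ← mul_assoc, ← mul_assoc]
    exact le_mul_of_one_le_left (Real.Gamma_pos_of_pos (by linarith)).le (by nlinarith)
  have hthree : (3 : ℝ) ^ (3 / 2 : ℝ) ≤ 6 := by
    rw [show (3 / 2 : ℝ) = 1 / 2 + 1 by norm_num, Real.rpow_add_one (by norm_num),
      ← Real.sqrt_eq_rpow]
    nlinarith [Real.sqrt_nonneg 3, Real.sq_sqrt (show (0 : ℝ) ≤ 3 by norm_num)]
  calc Real.Gamma x ≤ 2 * (x + 2) ^ (x + 2) :=
        hshift.trans (by gcongr; exact Gamma_le_rpow_self (by linarith))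
    _ ≤ 2 * Real.exp (2 * (3 * r) ^ (3 / 2 : ℝ)) := by
        grw [rpow_self_le_exp (by linarith : 0 < x + 2), show x + 2 ≤ 3 * r by linarith]
    _ ≤ 2 * Real.exp (12 * r ^ (3 / 2 : ℝ)) := by
        rw [Real.mul_rpow (by norm_num) (by linarith)]
        have : 0 ≤ r ^ (3 / 2 : ℝ) := by positivity
        refine mul_le_mul_of_nonneg_left (Real.exp_le_exp.2 ?_) zero_le_two
        nlinarith

lemma norm_cos_le (z : ℂ) : ‖Complex.cos z‖ ≤ Real.exp ‖z‖ := by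
  have h1 : ‖cexp (z * I)‖ ≤ Real.exp ‖z‖ := by simpa using norm_exp_le_exp_norm (z * I)
  have h2 : ‖cexp (-z * I)‖ ≤ Real.exp ‖z‖ := by simpa using norm_exp_le_exp_norm (-z * I)
  rw [Complex.cos, norm_div, Complex.norm_ofNat]
  linarith [norm_add_le (cexp (z * I)) (cexp (-z * I))]

lemma norm_two_pi_cpow_neg_le_one {w : ℂ} (hw : 0 ≤ w.re) : ‖(2 * (π : ℂ)) ^ (-w)‖ ≤ 1 := by
  rw [show (2 * (π : ℂ)) = ((2 * π : ℝ) : ℂ) by push_cast; rfl,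
    Complex.norm_cpow_eq_rpow_re_of_pos (by positivity)]
  exact Real.rpow_le_one_of_one_le_of_nonpos (by linarith [Real.pi_gt_three]) (by simpa using hw)

lemma ne_neg_natCast_of_re_pos {s : ℂ} (hs : 0 < s.re) (n : ℕ) : s ≠ -n := by
  rintro rfl
  simp only [neg_re, natCast_re, Left.neg_pos_iff] at hs
  exact hs.not_ge n.cast_nonneg

lemma norm_riemannZeta₁_one_sub_le {w : ℂ} (hw : 1 / 2 ≤ w.re) (hw1 : 1 ≤ ‖w - 1‖) :
    ‖riemannZeta₁ (1 - w)‖ ≤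
      ‖w‖ * (2 * Real.Gamma w.re * Real.exp (2 * ‖w‖) * (3 * (1 + ‖w‖) ^ 2)) := by
  have hne : w ≠ 1 := fun h ↦ by norm_num [h] at hw1
  have hw0 : w ≠ 0 := fun h ↦ by norm_num [h] at hw
  have hFE := riemannZeta_one_sub (ne_neg_natCast_of_re_pos (by linarith)) hne
  rw [riemannZeta_eq_inv_sub_mul (by simpa using hw0), inv_mul_eq_iff_eq_mul₀ (by simpa using hw0),
    show 1 - w - 1 = -w by ring] at hFE
  have hzeta : ‖riemannZeta w‖ ≤ 3 * (1 + ‖w‖) ^ 2 := by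
    rw [riemannZeta_eq_inv_sub_mul hne, norm_mul, norm_inv]
    exact (mul_le_of_le_one_left (norm_nonneg _) (inv_le_one_of_one_le₀ hw1)).trans
      (norm_riemannZeta₁_le hw)
  have hcos : ‖Complex.cos (π * w / 2)‖ ≤ Real.exp (2 * ‖w‖) := by
    refine (norm_cos_le _).trans (Real.exp_le_exp.2 ?_)
    rw [norm_div, norm_mul, Complex.norm_real, Real.norm_of_nonneg Real.pi_pos.le,
      Complex.norm_ofNat]
    nlinarith [Real.pi_lt_four, norm_nonneg w]
  rw [hFE, norm_mul, norm_neg, norm_mul, norm_mul, norm_mul, norm_mul, Complex.norm_ofNat]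
  have h2pi := norm_two_pi_cpow_neg_le_one (show 0 ≤ w.re by linarith)
  have hGamma := norm_Gamma_le (show 0 < w.re by linarith)
  calc _ ≤ ‖w‖ * (2 * 1 * Real.Gamma w.re * Real.exp (2 * ‖w‖) * (3 * (1 + ‖w‖) ^ 2)) := by
        gcongr
    _ = _ := by ring

lemma norm_riemannZeta₁_le_exp_of_one_le_norm {s : ℂ} (hs : 1 ≤ ‖s‖) :
    ‖riemannZeta₁ s‖ ≤ Real.exp (30 * (1 + ‖s‖) ^ (3 / 2 : ℝ)) := by
  set r := 1 + ‖s‖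
  have hr : 2 ≤ r := by grind
  have hexp (x : ℝ) : 1 + x ≤ Real.exp x := by linarith [Real.add_one_le_exp x]
  have hrE : r ≤ Real.exp r := by linarith [hexp r]
  have hrr : r ≤ r ^ (3 / 2 : ℝ) :=
    Real.self_le_rpow_of_one_le (one_le_two.trans hr) (by norm_num)
  rcases le_total (1 / 2) s.re with hre | hre
  · have h3 : (3 : ℝ) ≤ Real.exp r := by linarith [hexp r]
    calc ‖riemannZeta₁ s‖ ≤ 3 * r ^ 2 := norm_riemannZeta₁_le hre
      _ ≤ Real.exp r * Real.exp r ^ 2 := by gcongr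
      _ = Real.exp (3 * r) := by rw [← Real.exp_nat_mul, ← Real.exp_add]; congr 1; push_cast; ring
      _ ≤ _ := Real.exp_le_exp.2 (by linarith)
  · have hre' : 1 / 2 ≤ (1 - s).re := by rw [sub_re, one_re]; linarith
    have hw : ‖1 - s‖ ≤ r := by simpa using norm_sub_le 1 s
    have hGamma := Gamma_le_exp hre' ((re_le_norm _).trans hw) (by linarith)
    have h12 : (12 : ℝ) ≤ Real.exp (11 * r) := by linarith [hexp (11 * r)]
    have hbound := norm_riemannZeta₁_one_sub_le hre' (by simpa using hs)
    rw [sub_sub_cancel] at hbound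
    calc _ ≤ _ := hbound
      _ ≤ r * (2 * (2 * Real.exp (12 * r ^ (3 / 2 : ℝ))) * Real.exp (2 * r) *
          (3 * (1 + r) ^ 2)) := by gcongr
      _ = 12 * r * (1 + r) ^ 2 * Real.exp (2 * r) * Real.exp (12 * r ^ (3 / 2 : ℝ)) := by ring
      _ ≤ Real.exp (11 * r) * Real.exp r * Real.exp r ^ 2 * Real.exp (2 * r)
            * Real.exp (12 * r ^ (3 / 2 : ℝ)) := by
          gcongr
          exact hexp r
      _ = Real.exp (16 * r + 12 * r ^ (3 / 2 : ℝ)) := by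
          rw [← Real.exp_nat_mul, ← Real.exp_add, ← Real.exp_add, ← Real.exp_add, ← Real.exp_add]
          congr 1; push_cast; ring
      _ ≤ _ := Real.exp_le_exp.2 (by linarith)

lemma exists_norm_riemannZeta₁_le_exp :
    ∃ A : ℝ, ∀ z, ‖riemannZeta₁ z‖ ≤ Real.exp (A * (1 + ‖z‖) ^ (3 / 2 : ℝ)) := by
  refine ⟨30 * 2 ^ (3 / 2 : ℝ), fun z ↦ ?_⟩
  have h1 : 1 ≤ (1 + ‖z‖) ^ (3 / 2 : ℝ) := Real.one_le_rpow (by simp) (by norm_num)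
  have h2 : (1 : ℝ) ≤ 2 ^ (3 / 2 : ℝ) := Real.one_le_rpow (by norm_num) (by norm_num)
  rcases le_total 1 ‖z‖ with h | h
  · refine (norm_riemannZeta₁_le_exp_of_one_le_norm h).trans (Real.exp_le_exp.2 ?_)
    gcongr
    linarith
  · have hsphere (w) (hw : w ∈ frontier (Metric.ball (0 : ℂ) 1)) :
        ‖riemannZeta₁ w‖ ≤ Real.exp (30 * 2 ^ (3 / 2 : ℝ)) := by
      have hw1 : ‖w‖ = 1 := by simpa using Metric.frontier_ball_subset_sphere hw
      refine (norm_riemannZeta₁_le_exp_of_one_le_norm hw1.ge).trans_eq ?_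
      rw [hw1, one_add_one_eq_two]
    refine (Complex.norm_le_of_forall_mem_frontier_norm_le Metric.isBounded_ball
      differentiable_riemannZeta₁.diffContOnCl hsphere ?_).trans (Real.exp_le_exp.2 ?_)
    · rw [closure_ball _ one_ne_zero]
      simpa using h
    · exact le_mul_of_one_le_right (by positivity) h1

end ZetaGrowth

section Digamma

lemma tendsto_deriv_of_norm_le {ι : Type*} {l : Filter ι} [l.IsCountablyGenerated]
    {F : ι → ℂ → ℂ} {f : ℂ → ℂ} {U : Set ℂ} (hU : IsOpen U) {M : ℝ}
    (hF : ∀ᶠ i in l, DifferentiableOn ℂ (F i) U) (hf : DifferentiableOn ℂ f U)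
    (hM : ∀ᶠ i in l, ∀ w ∈ U, ‖F i w‖ ≤ M)
    (hlim : ∀ w ∈ U, Tendsto (fun i ↦ F i w) l (𝓝 (f w))) {z : ℂ} (hz : z ∈ U) :
    Tendsto (fun i ↦ deriv (F i) z) l (𝓝 (deriv f z)) := by
  obtain ⟨r, hr, hzr⟩ := Metric.nhds_basis_closedBall.mem_iff.1 (hU.mem_nhds hz)
  -- Dominated convergence in Cauchy's formula for the derivative.
  refine Tendsto.congr' (hF.mono fun i hi ↦ cderiv_eq_deriv hU hi hr hzr) ?_
  rw [← cderiv_eq_deriv hU hf hr hzr]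
  have hmem (θ : ℝ) : circleMap z r θ ∈ U := hzr (circleMap_mem_closedBall z hr.le θ)
  refine Tendsto.const_smul
    (intervalIntegral.tendsto_integral_filter_of_dominated_convergence
      (fun _ ↦ |r| * ((r ^ 2)⁻¹ * M)) ?_ ?_ intervalIntegrable_const
      (.of_forall fun θ _ ↦ ((hlim _ (hmem θ)).const_smul _).const_smul _)) _
  · filter_upwards [hF] with i hi
    have hcont : Continuous fun θ ↦ F i (circleMap z r θ) :=
      hi.continuousOn.comp_continuous (continuous_circleMap z r) hmem
    have hne (θ : ℝ) : (circleMap z r θ - z) ^ 2 ≠ 0 :=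
      pow_ne_zero 2 (sub_ne_zero.2 (circleMap_ne_center hr.ne'))
    simp only [deriv_circleMap, smul_eq_mul]
    exact (Continuous.mul (by fun_prop)
      (((by fun_prop : Continuous _).inv₀ hne).mul hcont)).aestronglyMeasurable
  · filter_upwards [hM] with i hi
    refine .of_forall fun θ _ ↦ ?_
    have := hi _ (hmem θ)
    simp only [norm_smul, deriv_circleMap, norm_mul, norm_inv, norm_pow, norm_circleMap_zero,
      Complex.norm_I, mul_one, circleMap_sub_center, sq_abs]
    gcongr

lemma norm_GammaSeq_le {s : ℂ} (hs : 0 < s.re) {n : ℕ} (hn : n ≠ 0) :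
    ‖Complex.GammaSeq s n‖ ≤ Real.Gamma s.re := by
  have hint := Real.GammaIntegral_convergent hs
  rw [GammaSeq_eq_approx_Gamma_integral hs hn, Real.Gamma_eq_integral hs,
    intervalIntegral.integral_of_le n.cast_nonneg]
  refine (norm_integral_le_of_norm_le (hint.mono_set Ioc_subset_Ioi_self) ?_).trans
    (setIntegral_mono_set hint ?_ Ioc_subset_Ioi_self.eventuallyLE)
  · filter_upwards [ae_restrict_mem measurableSet_Ioc] with u hu
    have : 0 ≤ 1 - u / n := sub_nonneg.2 (div_le_one_of_le₀ hu.2 n.cast_nonneg)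
    rw [norm_mul, Complex.norm_cpow_eq_rpow_re_of_pos hu.1, Complex.norm_real,
      Real.norm_of_nonneg (by positivity), sub_re, one_re]
    exact mul_le_mul_of_nonneg_right (one_sub_div_pow_le_exp_neg hu.2)
      (Real.rpow_nonneg hu.1.le _)
  · filter_upwards [ae_restrict_mem measurableSet_Ioi] with u hu
    have : 0 < u := hu
    simp only [Pi.zero_apply]
    positivity

lemma prod_add_natCast_ne_zero {s : ℂ} (hs : 0 < s.re) (n : ℕ) :
    ∏ j ∈ Finset.range (n + 1), (s + j) ≠ 0 :=
  Finset.prod_ne_zero_iff.2 fun j _ h ↦ ne_neg_natCast_of_re_pos hs j (eq_neg_of_add_eq_zero_left h)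

lemma cpow_mul_factorial_ne_zero (s : ℂ) {n : ℕ} (hn : n ≠ 0) :
    (n : ℂ) ^ s * n.factorial ≠ 0 := by
  simp [Complex.cpow_eq_zero_iff, hn, n.factorial_ne_zero]

lemma differentiableAt_GammaSeq {s : ℂ} (hs : 0 < s.re) {n : ℕ} (hn : n ≠ 0) :
    DifferentiableAt ℂ (Complex.GammaSeq · n) s :=
  ((differentiableAt_id.const_cpow (.inl (Nat.cast_ne_zero.2 hn))).mul_const _).div (by fun_prop)
    (prod_add_natCast_ne_zero hs n)

lemma logDeriv_GammaSeq {s : ℂ} (hs : 0 < s.re) {n : ℕ} (hn : n ≠ 0) :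
    logDeriv (Complex.GammaSeq · n) s = Real.log n - ∑ j ∈ Finset.range (n + 1), 1 / (s + j) := by
  have hn' : (n : ℂ) ≠ 0 := Nat.cast_ne_zero.2 hn
  have hcpow : HasDerivAt (fun z : ℂ ↦ (n : ℂ) ^ z * n.factorial)
      ((n : ℂ) ^ s * Complex.log n * n.factorial) s := by
    simpa using ((hasDerivAt_id s).const_cpow (c := (n : ℂ)) (.inl hn')).mul_const _
  have hfactor (j : ℕ) (_ : j ∈ Finset.range (n + 1)) : s + j ≠ 0 := fun h ↦
    ne_neg_natCast_of_re_pos hs j (eq_neg_of_add_eq_zero_left h)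
  unfold Complex.GammaSeq
  rw [logDeriv_div (f := fun z : ℂ ↦ (n : ℂ) ^ z * n.factorial)
    (g := fun z : ℂ ↦ ∏ j ∈ Finset.range (n + 1), (z + j)) s
    (cpow_mul_factorial_ne_zero s hn) (prod_add_natCast_ne_zero hs n) hcpow.differentiableAt
    (by fun_prop), logDeriv_apply, hcpow.deriv,
    logDeriv_prod (f := fun (j : ℕ) (z : ℂ) ↦ z + j) hfactor fun _ _ ↦ by fun_prop]
  congr 1
  · rw [mul_right_comm, mul_div_cancel_left₀ _ (cpow_mul_factorial_ne_zero s hn), natCast_log]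
  · simp [logDeriv_apply]

lemma tendsto_digamma {s : ℂ} (hs : 0 < s.re) :
    Tendsto (fun n : ℕ ↦ (Real.log n - ∑ j ∈ Finset.range (n + 1), 1 / (s + j) : ℂ)) atTop
      (𝓝 (digamma s)) := by
  set U : Set ℂ := re ⁻¹' Ioo (s.re / 2) (s.re + 1)
  have hpos (z) (hz : z ∈ U) : 0 < z.re := (half_pos hs).trans hz.1
  obtain ⟨M, hM⟩ := isCompact_Icc.exists_bound_of_continuousOn (f := Real.Gamma)
    (s := Icc (s.re / 2) (s.re + 1)) fun x hx ↦
      (Real.differentiableAt_Gamma fun m ↦ by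
        linarith [hx.1, m.cast_nonneg (α := ℝ)]).continuousAt.continuousWithinAt
  have hderiv : Tendsto (fun n : ℕ ↦ deriv (Complex.GammaSeq · n) s) atTop
      (𝓝 (deriv Complex.Gamma s)) := by
    refine tendsto_deriv_of_norm_le (M := M) (isOpen_Ioo.preimage continuous_re) ?_
      (fun z hz ↦ (differentiableAt_Gamma _
        (ne_neg_natCast_of_re_pos (hpos z hz))).differentiableWithinAt) ?_
      (fun z _ ↦ GammaSeq_tendsto_Gamma z) (z := s) ⟨by linarith, by linarith⟩
    · filter_upwards [eventually_ne_atTop 0] with n hn z hz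
      exact (differentiableAt_GammaSeq (hpos z hz) hn).differentiableWithinAt
    · filter_upwards [eventually_ne_atTop 0] with n hn z hz
      exact (norm_GammaSeq_le (hpos z hz) hn).trans
        ((le_abs_self _).trans (hM _ ⟨hz.1.le, hz.2.le⟩))
  refine (hderiv.div (GammaSeq_tendsto_Gamma s) (Gamma_ne_zero_of_re_pos hs)).congr' ?_
  filter_upwards [eventually_ne_atTop 0] with n hn
  exact logDeriv_GammaSeq hs hn

lemma log_mul_of_re_pos {z w : ℂ} (hz : 0 < z.re) (hw : 0 < w.re) :
    Complex.log (z * w) = Complex.log z + Complex.log w := by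
  have hargz := abs_lt.1 (abs_arg_lt_pi_div_two_iff.2 (.inl hz))
  have hargw := abs_lt.1 (abs_arg_lt_pi_div_two_iff.2 (.inl hw))
  refine (log_mul_eq_add_log_iff (fun h ↦ ?_) (fun h ↦ ?_)).2 ⟨by linarith, by linarith⟩
  · simp [h] at hz
  · simp [h] at hw

lemma norm_log_add_one_sub_log_sub_one_div_le {z : ℂ} (hz : 1 < z.re) :
    ‖Complex.log (z + 1) - Complex.log z - 1 / z‖ ≤ (1 / (z.re - 1) - 1 / z.re) / 2 := by
  have hz0 : z ≠ 0 := fun h ↦ by norm_num [h] at hz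
  have hre : 0 < (1 + 1 / z).re := by
    rw [add_re, one_re, one_div, inv_re]
    have : 0 ≤ z.re := by linarith
    have := normSq_nonneg z
    positivity
  have hw : ‖1 / z‖ ≤ 1 / z.re := by
    rw [norm_div, norm_one]
    exact one_div_le_one_div_of_le (by linarith) (re_le_norm z)
  have hx : 1 / z.re < 1 := (div_lt_one (by linarith)).2 hz
  rw [show z + 1 = z * (1 + 1 / z) by field_simp, log_mul_of_re_pos (by linarith) hre,
    add_sub_cancel_left]
  calc _ ≤ ‖1 / z‖ ^ 2 * (1 - ‖1 / z‖)⁻¹ / 2 := norm_log_one_add_sub_self_le (hw.trans_lt hx)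
    _ ≤ (1 / z.re) ^ 2 * (1 - 1 / z.re)⁻¹ / 2 := by
        have := inv_nonneg.2 (sub_nonneg.2 (hw.trans hx.le))
        have := sub_pos.2 hx
        gcongr
    _ = _ := by
        have : z.re - 1 ≠ 0 := by linarith
        have : z.re ≠ 0 := by linarith
        field_simp
        ring

lemma norm_log_add_natCast_sub_log_sub_sum_le {s : ℂ} (hs : 1 < s.re) (n : ℕ) :
    ‖Complex.log (s + n) - Complex.log s - ∑ j ∈ Finset.range n, 1 / (s + j)‖
      ≤ (1 / (s.re - 1) - 1 / (s.re + n - 1)) / 2 := by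
  induction n with
  | zero => simp
  | succ n ih =>
    have hstep := norm_log_add_one_sub_log_sub_one_div_le (z := s + n) (by
      rw [add_re, natCast_re]
      linarith [n.cast_nonneg (α := ℝ)])
    rw [add_re, natCast_re] at hstep
    rw [Finset.sum_range_succ, Nat.cast_succ, Nat.cast_succ, ← add_assoc, ← add_assoc,
      add_sub_cancel_right]
    calc _ = ‖(Complex.log (s + n) - Complex.log s - ∑ j ∈ Finset.range n, 1 / (s + j))
          + (Complex.log (s + n + 1) - Complex.log (s + n) - 1 / (s + n))‖ := by ring_nf
      _ ≤ _ := norm_add_le _ _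
      _ ≤ _ := by linarith

lemma tendsto_log_sub_log_add_natCast {s : ℂ} (hs : 0 < s.re) :
    Tendsto (fun n : ℕ ↦ (Real.log n : ℂ) - Complex.log (s + (n + 1 : ℕ))) atTop (𝓝 0) := by
  have hdiv : Tendsto (fun n : ℕ ↦ 1 + (s + 1) / n) atTop (𝓝 1) := by
    simpa using (tendsto_const_div_atTop_nhds_zero_nat (s + 1)).const_add 1
  have hlog := (hdiv.clog (by simp)).neg
  rw [Complex.log_one, neg_zero] at hlog
  refine hlog.congr' ?_
  filter_upwards [eventually_gt_atTop 0] with n hn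
  have hn' : (n : ℂ) ≠ 0 := Nat.cast_ne_zero.2 hn.ne'
  have hre : 0 < (1 + (s + 1) / n).re := by
    rw [add_re, div_natCast_re, add_re, one_re]
    positivity
  rw [show s + (n + 1 : ℕ) = n * (1 + (s + 1) / n) by push_cast; field_simp; ring,
    log_mul_of_re_pos (by simpa using hn) hre, natCast_log]
  ring

lemma norm_digamma_sub_log_le {s : ℂ} (hs : 1 < s.re) :
    ‖digamma s - Complex.log s‖ ≤ 1 / (s.re - 1) / 2 := by
  have hlim := ((tendsto_digamma (by linarith)).sub
    (tendsto_log_sub_log_add_natCast (by linarith : 0 < s.re))).sub_const (Complex.log s)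
  rw [sub_zero] at hlim
  refine le_of_tendsto hlim.norm (.of_forall fun n ↦ ?_)
  have hsum := norm_log_add_natCast_sub_log_sub_sum_le hs (n + 1)
  have : 0 ≤ 1 / (s.re + (n + 1 : ℕ) - 1) := by
    rw [Nat.cast_succ]
    exact one_div_nonneg.2 (by linarith [n.cast_nonneg (α := ℝ)])
  calc _ = ‖Complex.log (s + (n + 1 : ℕ)) - Complex.log s
        - ∑ j ∈ Finset.range (n + 1), 1 / (s + j)‖ := by ring_nf
    _ ≤ _ := by linarith

lemma norm_log_sub_log_abs_im_add_two_le {s : ℂ} (h1 : 1 ≤ s.re) (h2 : s.re ≤ 2) :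
    ‖Complex.log s - Real.log (|s.im| + 2)‖ ≤ 4 := by
  have hupper : ‖s‖ ≤ |s.im| + 2 := by
    linarith [norm_le_abs_re_add_abs_im s, abs_of_pos (by linarith : 0 < s.re)]
  have hlower : (|s.im| + 2) / 3 ≤ ‖s‖ := by
    linarith [re_le_norm s, abs_im_le_norm s]
  have hpos : 0 < |s.im| + 2 := by positivity
  have harg := abs_arg_lt_pi_div_two_iff.2 (.inl (by linarith : 0 < s.re))
  have hlog3 : Real.log 3 ≤ 2 := by
    linarith [Real.log_le_sub_one_of_pos (show (0 : ℝ) < 3 by norm_num)]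
  have hle := Real.log_le_log (by linarith) hupper
  have hge := Real.log_le_log (by positivity) hlower
  rw [Real.log_div hpos.ne' (by norm_num)] at hge
  refine (norm_le_abs_re_add_abs_im _).trans ?_
  rw [sub_re, sub_im, ofReal_re, ofReal_im, log_re, log_im, sub_zero,
    abs_of_nonpos (by linarith)]
  linarith [Real.pi_lt_four]

end Digamma

section FunctionalEquation

/-- The factor `2 (2π)⁻ˢ Γ(s) ζ(s)` of the functional equation
`ζ(1 - s) = 2 (2π)⁻ˢ Γ(s) ζ(s) cos(πs/2)`; it is holomorphic and zero free on `1 < re s`, so that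
the cosine carries all the zeros of `ζ` in `re s < 0`. -/
def zetaReflection (s : ℂ) : ℂ := 2 * (2 * π : ℂ) ^ (-s) * Complex.Gamma s * riemannZeta s

lemma riemannZeta_one_sub_eq_zetaReflection_mul_cos {s : ℂ} (hs : 0 < s.re) (hs1 : s ≠ 1) :
    riemannZeta (1 - s) = zetaReflection s * Complex.cos (π * s / 2) := by
  rw [riemannZeta_one_sub (ne_neg_natCast_of_re_pos hs) hs1, zetaReflection]
  ring

lemma two_mul_two_pi_cpow_neg_ne_zero (s : ℂ) : 2 * (2 * π : ℂ) ^ (-s) ≠ 0 := by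
  simp [Complex.cpow_eq_zero_iff]

lemma zetaReflection_ne_zero {s : ℂ} (hs : 1 ≤ s.re) : zetaReflection s ≠ 0 :=
  mul_ne_zero (mul_ne_zero (two_mul_two_pi_cpow_neg_ne_zero s)
    (Complex.Gamma_ne_zero_of_re_pos (by linarith))) (riemannZeta_ne_zero_of_one_le_re hs)

lemma hasDerivAt_two_mul_two_pi_cpow_neg (s : ℂ) :
    HasDerivAt (fun z : ℂ ↦ 2 * (2 * π : ℂ) ^ (-z))
      (2 * (2 * π : ℂ) ^ (-s) * -(Real.log (2 * π) : ℂ)) s := by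
  have h := ((hasDerivAt_neg s).const_cpow (c := (2 * π : ℂ)) (.inl (by simp))).const_mul 2
  refine h.congr_deriv ?_
  rw [Complex.ofReal_log (by positivity)]
  push_cast
  ring

lemma differentiableAt_zetaReflection {s : ℂ} (hs : 0 < s.re) (hs1 : s ≠ 1) :
    DifferentiableAt ℂ zetaReflection s :=
  ((hasDerivAt_two_mul_two_pi_cpow_neg s).differentiableAt.mul
    (Complex.differentiableAt_Gamma s (ne_neg_natCast_of_re_pos hs))).mul
    (differentiableAt_riemannZeta hs1)

lemma logDeriv_zetaReflection {s : ℂ} (hs : 1 ≤ s.re) (hs1 : s ≠ 1) :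
    logDeriv zetaReflection s = -(Real.log (2 * π) : ℂ) + digamma s + logDeriv riemannZeta s := by
  have hpow := hasDerivAt_two_mul_two_pi_cpow_neg s
  have hpow0 := two_mul_two_pi_cpow_neg_ne_zero s
  have hΓ := Complex.differentiableAt_Gamma s (ne_neg_natCast_of_re_pos (by linarith))
  have hΓ0 := Complex.Gamma_ne_zero_of_re_pos (s := s) (by linarith)
  unfold zetaReflection
  rw [logDeriv_mul (f := fun z : ℂ ↦ 2 * (2 * π : ℂ) ^ (-z) * Complex.Gamma z) s
      (mul_ne_zero hpow0 hΓ0) (riemannZeta_ne_zero_of_one_le_re hs)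
      (hpow.differentiableAt.mul hΓ) (differentiableAt_riemannZeta hs1),
    logDeriv_mul (f := fun z : ℂ ↦ 2 * (2 * π : ℂ) ^ (-z)) s hpow0 hΓ0 hpow.differentiableAt hΓ,
    digamma_def, logDeriv_apply, hpow.deriv, mul_div_cancel_left₀ _ hpow0]

lemma neg_deriv_riemannZeta_one_sub {s : ℂ} (hs : 0 < s.re) (hs1 : s ≠ 1) :
    -deriv riemannZeta (1 - s) = deriv zetaReflection s * Complex.cos (π * s / 2)
      - zetaReflection s * (π / 2 * Complex.sin (π * s / 2)) := by
  have hFE : (fun z ↦ riemannZeta (1 - z)) =ᶠ[𝓝 s]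
      fun z ↦ zetaReflection z * Complex.cos (π * z / 2) := by
    filter_upwards [(isOpen_lt continuous_const continuous_re).mem_nhds hs, isOpen_ne.mem_nhds hs1]
      with z hz hz1 using riemannZeta_one_sub_eq_zetaReflection_mul_cos hz hz1
  have harg : HasDerivAt (fun z : ℂ ↦ (π : ℂ) * z / 2) (π / 2) s := by
    simpa using ((hasDerivAt_id s).const_mul (π : ℂ)).div_const 2
  rw [← deriv_comp_const_sub, hFE.deriv_eq,
    ((differentiableAt_zetaReflection hs hs1).hasDerivAt.fun_mul harg.ccos).deriv]
  ring

lemma logDeriv_riemannZeta_one_sub {s : ℂ} (hs : 1 ≤ s.re) (hs1 : s ≠ 1)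
    (hcos : Complex.cos (π * s / 2) ≠ 0) :
    logDeriv riemannZeta (1 - s) = (Real.log (2 * π) : ℂ) - digamma s - logDeriv riemannZeta s
      + π / 2 * Complex.tan (π * s / 2) := by
  have hG := zetaReflection_ne_zero hs
  have hlog : -logDeriv riemannZeta (1 - s)
      = logDeriv zetaReflection s - π / 2 * Complex.tan (π * s / 2) := by
    rw [logDeriv_apply, logDeriv_apply, ← neg_div, neg_deriv_riemannZeta_one_sub (by linarith) hs1,
      riemannZeta_one_sub_eq_zetaReflection_mul_cos (by linarith) hs1, Complex.tan]
    field_simp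
  rw [logDeriv_zetaReflection hs hs1] at hlog
  linear_combination -hlog

lemma sin_eq_neg_conj_cos {z : ℂ} (hz : z.re = 3 * π / 4) :
    Complex.sin z = -starRingEnd ℂ (Complex.cos z) := by
  rw [← Complex.cos_pi_div_two_sub, ← Complex.cos_conj, ← Complex.cos_pi_sub, ← Complex.cos_neg]
  congr 1
  apply Complex.ext
  · simp [hz]
    ring
  · simp

lemma cos_ne_zero_of_re_eq {z : ℂ} (hz : z.re = 3 * π / 4) : Complex.cos z ≠ 0 := fun h ↦ by
  simpa [sin_eq_neg_conj_cos hz, h] using Complex.sin_sq_add_cos_sq z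

lemma norm_tan_of_re_eq {z : ℂ} (hz : z.re = 3 * π / 4) : ‖Complex.tan z‖ = 1 := by
  rw [Complex.tan, sin_eq_neg_conj_cos hz, norm_div, norm_neg, RCLike.norm_conj,
    div_self (norm_ne_zero_iff.2 (cos_ne_zero_of_re_eq hz))]

lemma norm_logDeriv_riemannZeta_le {σ : ℝ} (hσ : 1 < σ) {s : ℂ} (hs : s.re = σ) :
    ‖logDeriv riemannZeta s‖
      ≤ ∑' n, ‖LSeries.term (fun n ↦ (ArithmeticFunction.vonMangoldt n : ℂ)) σ n‖ := by
  have hs' : 1 < s.re := hs ▸ hσ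
  rw [← norm_neg, logDeriv_apply, ← neg_div,
    ← ArithmeticFunction.LSeries_vonMangoldt_eq_deriv_riemannZeta_div hs']
  refine (norm_tsum_le_tsum_norm
    (ArithmeticFunction.LSeriesSummable_vonMangoldt hs').norm).trans_eq (tsum_congr fun n ↦ ?_)
  rw [LSeries.norm_term_eq, LSeries.norm_term_eq, hs, ofReal_re]

lemma norm_logDeriv_riemannZeta_one_sub_add_log_le {s : ℂ} (hs : s.re = 3 / 2) :
    ‖logDeriv riemannZeta (1 - s) + Real.log (|s.im| + 2)‖ ≤ Real.log (2 * π) + 7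
      + ∑' n, ‖LSeries.term (fun n ↦ (ArithmeticFunction.vonMangoldt n : ℂ)) (3 / 2 : ℝ) n‖ := by
  have hre : (π * s / 2).re = 3 * π / 4 := by
    rw [div_ofNat_re, re_ofReal_mul, hs]
    ring
  have hlog2π : ‖(Real.log (2 * π) : ℂ)‖ = Real.log (2 * π) := by
    rw [Complex.norm_real, Real.norm_of_nonneg (Real.log_nonneg (by linarith [Real.pi_gt_three]))]
  have htan : ‖(π / 2 * Complex.tan (π * s / 2) : ℂ)‖ ≤ 2 := by
    rw [norm_mul, norm_tan_of_re_eq hre, mul_one, norm_div, Complex.norm_real,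
      Real.norm_of_nonneg Real.pi_pos.le, Complex.norm_ofNat]
    linarith [Real.pi_lt_four]
  have hdigamma := norm_digamma_sub_log_le (s := s) (by rw [hs]; norm_num)
  have hlog := norm_log_sub_log_abs_im_add_two_le (s := s) (by rw [hs]; norm_num)
    (by rw [hs]; norm_num)
  have hζ := norm_logDeriv_riemannZeta_le (σ := 3 / 2) (by norm_num) hs
  rw [hs] at hdigamma
  calc ‖logDeriv riemannZeta (1 - s) + Real.log (|s.im| + 2)‖
      = ‖(Real.log (2 * π) : ℂ) - (digamma s - Complex.log s)
          - (Complex.log s - Real.log (|s.im| + 2)) + π / 2 * Complex.tan (π * s / 2)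
          - logDeriv riemannZeta s‖ := by
        rw [logDeriv_riemannZeta_one_sub (by rw [hs]; norm_num)
          (fun h ↦ by norm_num [h] at hs) (cos_ne_zero_of_re_eq hre)]
        ring_nf
    _ ≤ ‖(Real.log (2 * π) : ℂ)‖ + ‖digamma s - Complex.log s‖
          + ‖Complex.log s - Real.log (|s.im| + 2)‖ + ‖(π / 2 * Complex.tan (π * s / 2) : ℂ)‖
          + ‖logDeriv riemannZeta s‖ := by
        refine (norm_sub_le _ _).trans (add_le_add_left ?_ _)
        refine (norm_add_le _ _).trans (add_le_add_left ?_ _)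
        exact (norm_sub_le _ _).trans (add_le_add_left (norm_sub_le _ _) _)
    _ ≤ _ := by linarith

end FunctionalEquation

section Zeros

lemma riemannZeta_ne_zero_of_re_eq_neg_half {s : ℂ} (hs : s.re = -1 / 2) : riemannZeta s ≠ 0 := by
  have hre : (1 - s).re = 3 / 2 := by
    rw [sub_re, one_re, hs]
    norm_num
  rw [← sub_sub_cancel 1 s, riemannZeta_one_sub_eq_zetaReflection_mul_cos (by rw [hre]; norm_num)
    (fun h ↦ by norm_num [h] at hre)]
  refine mul_ne_zero (zetaReflection_ne_zero (by rw [hre]; norm_num)) (cos_ne_zero_of_re_eq ?_)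
  rw [div_ofNat_re, re_ofReal_mul, hre]
  ring

lemma exists_eq_neg_two_mul_of_riemannZeta_eq_zero {s : ℂ} (hs : s.re ≤ 0)
    (hζ : riemannZeta s = 0) : ∃ n : ℕ, s = -2 * (n + 1) := by
  have hre : 1 ≤ (1 - s).re := by
    rw [sub_re, one_re]
    linarith
  have hs0 : s ≠ 0 := by
    rintro rfl
    norm_num [riemannZeta_zero] at hζ
  rw [← sub_sub_cancel 1 s, riemannZeta_one_sub_eq_zetaReflection_mul_cos (by linarith)
    (by simpa using hs0), mul_eq_zero, or_iff_right (zetaReflection_ne_zero hre),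
    Complex.cos_eq_zero_iff] at hζ
  obtain ⟨k, hk⟩ := hζ
  have hsk : s = -2 * k := by
    field_simp at hk
    linear_combination -hk
  have hk0 : 0 < k := by
    have hk' : (0 : ℝ) ≤ k := by
      have := congr_arg re hsk
      simp at this
      linarith
    refine lt_of_le_of_ne (by exact_mod_cast hk') fun h ↦ hs0 ?_
    simp [hsk, ← h]
  lift k to ℕ using hk0.le
  obtain ⟨n, rfl⟩ := Nat.exists_eq_succ_of_ne_zero (by omega : k ≠ 0)
  exact ⟨n, by rw [hsk]; push_cast; ring⟩

lemma zetaNontrivZero_or_exists_eq_neg_two_mul {s : ℂ} (hζ : riemannZeta s = 0) :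
    ZetaNontrivZero s ∨ ∃ n : ℕ, s = -2 * (n + 1) := by
  rcases le_or_gt s.re 0 with hs | hs
  · exact .inr (exists_eq_neg_two_mul_of_riemannZeta_eq_zero hs hζ)
  · exact .inl ⟨hζ, hs, not_le.1 fun h ↦ riemannZeta_ne_zero_of_one_le_re h hζ⟩

lemma deriv_riemannZeta_neg_two_mul_ne_zero (n : ℕ) : deriv riemannZeta (-2 * (n + 1)) ≠ 0 := by
  have hre : 1 < (2 * n + 3 : ℂ).re := by
    have := n.cast_nonneg (α := ℝ)
    simp only [add_re, re_ofNat, mul_re, natCast_re, im_ofNat, natCast_im]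
    linarith
  have hcos : Complex.cos (π * (2 * n + 3 : ℂ) / 2) = 0 :=
    Complex.cos_eq_zero_iff.2 ⟨n + 1, by push_cast; ring⟩
  have hsin : Complex.sin (π * (2 * n + 3 : ℂ) / 2) ≠ 0 := fun h ↦ by
    simpa [h, hcos] using Complex.sin_sq_add_cos_sq (π * (2 * n + 3 : ℂ) / 2)
  have hderiv := neg_deriv_riemannZeta_one_sub (by linarith) (fun h ↦ by norm_num [h] at hre)
  rw [hcos, mul_zero, zero_sub, neg_inj, show 1 - (2 * n + 3 : ℂ) = -2 * (n + 1) by ring] at hderiv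
  rw [hderiv]
  exact mul_ne_zero (zetaReflection_ne_zero hre.le) (mul_ne_zero (by simp) hsin)

lemma zetaMult_neg_two_mul (n : ℕ) : zetaMult (-2 * (n + 1)) = 1 := by
  have h1 : 1 ∈ {k : ℕ | iteratedDeriv k riemannZeta (-2 * (n + 1)) ≠ 0} := by
    simpa [iteratedDeriv_one] using deriv_riemannZeta_neg_two_mul_ne_zero n
  refine le_antisymm (Nat.sInf_le h1) (le_csInf ⟨1, h1⟩ fun k hk ↦ Nat.one_le_iff_ne_zero.2 ?_)
  rintro rfl
  exact hk (by rw [iteratedDeriv_zero, riemannZeta_neg_two_mul_nat_add_one])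

lemma riemannZeta₁_eq_sub_one_mul {s : ℂ} (hs : s ≠ 1) :
    riemannZeta₁ s = (s - 1) * riemannZeta s := by
  rw [riemannZeta_eq_inv_sub_mul hs, mul_inv_cancel_left₀ (sub_ne_zero.2 hs)]

lemma riemannZeta₁_eventuallyEq {s : ℂ} (hs : s ≠ 1) :
    riemannZeta₁ =ᶠ[𝓝 s] fun z ↦ (z - 1) * riemannZeta z := by
  filter_upwards [isOpen_ne.mem_nhds hs] with z hz using riemannZeta₁_eq_sub_one_mul hz

lemma riemannZeta₁_eq_zero_iff {s : ℂ} : riemannZeta₁ s = 0 ↔ riemannZeta s = 0 := by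
  rcases eq_or_ne s 1 with rfl | hs
  · simp [riemannZeta₁_one, riemannZeta_one_ne_zero]
  · rw [riemannZeta₁_eq_sub_one_mul hs, mul_eq_zero, or_iff_right (sub_ne_zero.2 hs)]

lemma logDeriv_riemannZeta₁ {s : ℂ} (hs : s ≠ 1) (hζ : riemannZeta s ≠ 0) :
    logDeriv riemannZeta₁ s = logDeriv riemannZeta s + 1 / (s - 1) := by
  have hEq := riemannZeta₁_eventuallyEq hs
  rw [logDeriv_apply, hEq.deriv_eq, hEq.eq_of_nhds, ← logDeriv_apply (fun z ↦ _ * _),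
    logDeriv_mul (f := fun z ↦ z - 1) (g := riemannZeta) s (sub_ne_zero.2 hs) hζ (by fun_prop)
      (differentiableAt_riemannZeta hs), add_comm]
  simp [logDeriv_apply]

lemma analyticOrderNatAt_riemannZeta₁ {ρ : ℂ} (hρ : riemannZeta ρ = 0) :
    analyticOrderNatAt riemannZeta₁ ρ = zetaMult ρ := by
  have hρ1 : ρ ≠ 1 := by
    rintro rfl
    exact riemannZeta_one_ne_zero hρ
  have hζ : AnalyticAt ℂ riemannZeta ρ :=
    DifferentiableOn.analyticAt (s := {1}ᶜ) (fun z hz ↦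
      (differentiableAt_riemannZeta hz).differentiableWithinAt)
      (isOpen_compl_singleton.mem_nhds hρ1)
  have hsub : AnalyticAt ℂ (fun z : ℂ ↦ z - 1) ρ := by fun_prop
  have horder : analyticOrderAt riemannZeta₁ ρ = analyticOrderAt riemannZeta ρ := by
    rw [analyticOrderAt_congr (riemannZeta₁_eventuallyEq hρ1),
      show (fun z ↦ (z - 1) * riemannZeta z) = (fun z ↦ z - 1) * riemannZeta from rfl,
      analyticOrderAt_mul hsub hζ, hsub.analyticOrderAt_eq_zero.2 (sub_ne_zero.2 hρ1), zero_add]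
  have hfin : analyticOrderAt riemannZeta₁ ρ ≠ ⊤ :=
    analyticOrderAt_ne_top_of_differentiable differentiable_riemannZeta₁ (z₀ := 1)
      (by simp [riemannZeta₁_one]) ρ
  obtain ⟨hlt, hne⟩ := (analyticOrderAt_eq_nat_iff_iteratedDeriv_eq_zero hζ).1
    (horder.symm.trans (Nat.cast_analyticOrderNatAt hfin).symm)
  exact le_antisymm (le_csInf ⟨_, hne⟩ fun n hn ↦ not_lt.1 fun h ↦ hn (hlt n h)) (Nat.sInf_le hne)

end Zeros

section SumsOverZeros

open Metric

instance countable_riemannZetaZeros : Countable riemannZetaZeros :=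
  have : DiscreteTopology riemannZetaZeros := isDiscrete_riemannZetaZeros.to_subtype
  TopologicalSpace.separableSpace_iff_countable.1 inferInstance

/-- The zeros of `ζ`, trivial ones included, at distance at most `n` from `z`: the finite sets along
which sums over the zeros are first taken, before absolute convergence is known. -/
def zerosInBall (z : ℂ) (n : ℕ) : Finset riemannZetaZeros :=
  ((isCompact_closedBall z n).inter_riemannZetaZeros_finite.preimage
    Subtype.val_injective.injOn).toFinset

lemma mem_zerosInBall {z : ℂ} {n : ℕ} {ρ : riemannZetaZeros} :
    ρ ∈ zerosInBall z n ↔ (ρ : ℂ) ∈ closedBall z n := by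
  simp [zerosInBall]

lemma tendsto_zerosInBall (z : ℂ) : Tendsto (zerosInBall z) atTop atTop := by
  refine tendsto_atTop_finset_of_monotone (fun m n hmn ρ ↦ ?_) fun ρ ↦ ?_
  · simp only [mem_zerosInBall]
    exact fun h ↦ closedBall_subset_closedBall (by exact_mod_cast hmn) h
  · obtain ⟨n, hn⟩ := exists_nat_ge (dist (ρ : ℂ) z)
    exact ⟨n, mem_zerosInBall.2 hn⟩

variable {a b : ℂ}

lemma tendsto_sum_zetaMult_mul_poleKernel (ha : riemannZeta a ≠ 0) (hb : riemannZeta b ≠ 0) :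
    Tendsto (fun n ↦ ∑ ρ ∈ zerosInBall b n, (zetaMult ρ : ℂ) * poleKernel a b ρ) atTop
      (𝓝 (logDeriv riemannZeta₁ a - logDeriv riemannZeta₁ b)) := by
  obtain ⟨A, hA⟩ := exists_norm_riemannZeta₁_le_exp
  have h := tendsto_sum_poleKernel_of_norm_le_exp_rpow differentiable_riemannZeta₁ (by norm_num)
    (by norm_num) hA (mt riemannZeta₁_eq_zero_iff.1 hb)
    (S := fun n ↦ (zerosInBall b n).map (.subtype _))
    (by simp [riemannZeta₁_eq_zero_iff, mem_zerosInBall, mem_riemannZetaZeros, and_comm])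
    (mt riemannZeta₁_eq_zero_iff.1 ha)
  refine h.congr fun n ↦ ?_
  rw [Finset.sum_map]
  exact Finset.sum_congr rfl fun ρ _ ↦ by
    simp [analyticOrderNatAt_riemannZeta₁ ρ.2]

lemma hasSum_zetaMult_mul_poleKernel (ha : riemannZeta a ≠ 0) (hb : riemannZeta b ≠ 0)
    (h : Summable fun ρ : riemannZetaZeros ↦ (zetaMult ρ : ℂ) * poleKernel a b ρ) :
    HasSum (fun ρ : riemannZetaZeros ↦ (zetaMult ρ : ℂ) * poleKernel a b ρ)
      (logDeriv riemannZeta₁ a - logDeriv riemannZeta₁ b) :=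
  tendsto_nhds_unique (h.hasSum.comp (tendsto_zerosInBall b))
    (tendsto_sum_zetaMult_mul_poleKernel ha hb) ▸ h.hasSum

/- A series of complex numbers which lie, up to a summable error, in a fixed cone
`‖z‖ ≤ C * re z` behaves like one with nonnegative terms. -/
lemma summable_norm_of_norm_le_mul_re_add {ι : Type*} {g : ι → ℂ} {h : ι → ℝ} {C : ℝ} {l : ℂ}
    {S : ℕ → Finset ι} (hS : Tendsto S atTop atTop)
    (hg : Tendsto (fun n ↦ ∑ i ∈ S n, g i) atTop (𝓝 l)) (hh : Summable h)
    (hle : ∀ i, ‖g i‖ ≤ C * (g i).re + h i) : Summable fun i ↦ ‖g i‖ := by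
  have hlim : Tendsto (fun n ↦ ∑ i ∈ S n, (C * (g i).re + h i)) atTop
      (𝓝 (C * l.re + ∑' i, h i)) := by
    simp only [Finset.sum_add_distrib, ← Finset.mul_sum, ← Complex.re_sum]
    exact (((continuous_re.tendsto l).comp hg).const_mul C).add (hh.hasSum.comp hS)
  obtain ⟨B, hB⟩ := hlim.bddAbove_range
  refine summable_of_sum_le (c := B) (fun _ ↦ norm_nonneg _) fun u ↦ ?_
  obtain ⟨n, hn⟩ := (hS.eventually_ge_atTop u).exists
  calc ∑ i ∈ u, ‖g i‖ ≤ ∑ i ∈ S n, ‖g i‖ :=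
        Finset.sum_le_sum_of_subset_of_nonneg hn fun _ _ _ ↦ norm_nonneg _
    _ ≤ ∑ i ∈ S n, (C * (g i).re + h i) := Finset.sum_le_sum fun i _ ↦ hle i
    _ ≤ B := hB ⟨n, rfl⟩

lemma norm_poleKernel_le_mul_re {p : ℂ} {δ : ℝ} (hδ : 0 < δ) (ha : δ ≤ (a - p).re)
    (hb : δ ≤ (p - b).re) : ‖poleKernel a b p‖ ≤ ‖a - b‖ / (2 * δ) * (poleKernel a b p).re := by
  have hu : 0 < ‖a - p‖ := norm_pos_iff.2 fun h ↦ by simp [h] at ha; linarith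
  have hv : 0 < ‖p - b‖ := norm_pos_iff.2 fun h ↦ by simp [h] at hb; linarith
  have hK : poleKernel a b p = (a - p)⁻¹ + (p - b)⁻¹ := by
    rw [poleKernel_eq_sub (sub_ne_zero.1 (norm_pos_iff.1 hu))
      (sub_ne_zero.1 (norm_pos_iff.1 hv)).symm, ← neg_sub p b, one_div, one_div, inv_neg,
      sub_neg_eq_add]
  have hre : 2 * δ / (‖a - p‖ * ‖p - b‖) ≤ (poleKernel a b p).re := calc
    2 * δ / (‖a - p‖ * ‖p - b‖) = δ * (2 * ‖a - p‖⁻¹ * ‖p - b‖⁻¹) := by ring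
    _ ≤ δ * (‖a - p‖⁻¹ ^ 2 + ‖p - b‖⁻¹ ^ 2) := by gcongr; exact two_mul_le_add_sq _ _
    _ = δ / ‖a - p‖ ^ 2 + δ / ‖p - b‖ ^ 2 := by ring
    _ ≤ (a - p).re / ‖a - p‖ ^ 2 + (p - b).re / ‖p - b‖ ^ 2 := by gcongr
    _ = (poleKernel a b p).re := by
      rw [hK, add_re, inv_re, inv_re, normSq_eq_norm_sq, normSq_eq_norm_sq]
  calc ‖poleKernel a b p‖ = ‖a - b‖ / (2 * δ) * (2 * δ / (‖a - p‖ * ‖p - b‖)) := by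
        rw [poleKernel, norm_div, norm_mul]; field_simp
    _ ≤ ‖a - b‖ / (2 * δ) * (poleKernel a b p).re := by gcongr

/-- Montgomery's kernel `2 / ((3/2 + it - p)(p + 1/2 - it))`, equal to `2 / (1 + (t - γ)²)` at
`p = 1/2 + iγ`. -/
def montgomeryKernel (t : ℝ) (p : ℂ) : ℂ := poleKernel (3 / 2 + I * t) (-1 / 2 + I * t) p

lemma montgomeryKernel_eq_div (t : ℝ) (p : ℂ) :
    montgomeryKernel t p = 2 / ((3 / 2 + I * t - p) * (p - (-1 / 2 + I * t))) := by
  rw [montgomeryKernel, poleKernel]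
  congr 1
  ring

lemma montgomeryKernel_of_re_eq_half (t : ℝ) {p : ℂ} (hp : p.re = 1 / 2) :
    montgomeryKernel t p = 2 / ((1 + (t - p.im) ^ 2 : ℝ) : ℂ) := by
  rw [montgomeryKernel_eq_div]
  congr 1
  apply Complex.ext <;> simp [hp, sq] <;> ring

lemma norm_montgomeryKernel_le_two_mul_re (t : ℝ) {p : ℂ} (h0 : 0 ≤ p.re) (h1 : p.re ≤ 1) :
    ‖montgomeryKernel t p‖ ≤ 2 * (montgomeryKernel t p).re := by
  refine (norm_poleKernel_le_mul_re (δ := 1 / 2) (by norm_num) ?_ ?_).trans_eq ?_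
  · simp; linarith
  · simp; linarith
  · rw [montgomeryKernel]; norm_num

lemma norm_montgomeryKernel_neg_two_mul_le (t : ℝ) (n : ℕ) : ‖montgomeryKernel t (-2 * (n + 1))‖ ≤
    4 * (1 / (n + 1 + |t|) - 1 / ((n + 1 : ℕ) + 1 + |t|)) := by
  have ht := abs_nonneg t
  set P : ℝ := (n + 1 + |t|) * (n + 2 + |t|) / 2 with hP
  have le_sq_norm {z : ℂ} (hre : (n : ℝ) + 3 / 2 ≤ |z.re|) (him : |z.im| = |t|) :
      P ≤ ‖z‖ ^ 2 := by
    rw [← normSq_eq_norm_sq, normSq_apply, ← abs_mul_abs_self z.re, ← abs_mul_abs_self z.im, him]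
    nlinarith [sq_nonneg (|z.re| - |t|)]
  have ha : P ≤ ‖3 / 2 + I * t - -2 * (n + 1)‖ ^ 2 :=
    le_sq_norm (le_abs.2 (.inl (by simp; linarith))) (by simp)
  have hb : P ≤ ‖-2 * (n + 1) - (-1 / 2 + I * t)‖ ^ 2 :=
    le_sq_norm (le_abs.2 (.inr (by simp; linarith))) (by simp)
  have hab : P ≤ ‖(3 / 2 + I * t - -2 * (n + 1)) * (-2 * (n + 1) - (-1 / 2 + I * t))‖ := by
    refine le_of_sq_le_sq ?_ (norm_nonneg _)
    rw [norm_mul, mul_pow, sq P]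
    gcongr
  calc ‖montgomeryKernel t (-2 * (n + 1))‖ ≤ 2 / P := by
        rw [montgomeryKernel_eq_div, norm_div, Complex.norm_ofNat]
        gcongr
    _ = 4 * (1 / (n + 1 + |t|) - 1 / ((n + 1 : ℕ) + 1 + |t|)) := by
        rw [hP]; push_cast; field_simp; ring

lemma hasSum_one_div_sub_one_div_succ {c : ℝ} (hc : -1 < c) :
    HasSum (fun n : ℕ ↦ 1 / ((n : ℝ) + 1 + c) - 1 / ((n + 1 : ℕ) + 1 + c)) (1 / (1 + c)) := by
  rw [hasSum_iff_tendsto_nat_of_nonneg]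
  · simp_rw [Finset.sum_range_sub' (fun i : ℕ ↦ 1 / ((i : ℝ) + 1 + c))]
    have h : Tendsto (fun n : ℕ ↦ 1 / ((n : ℝ) + 1 + c)) atTop (𝓝 0) := by
      simp_rw [one_div, add_assoc]
      exact tendsto_inv_atTop_zero.comp
        (tendsto_atTop_add_const_right _ _ tendsto_natCast_atTop_atTop)
    simpa using h.const_sub (1 / (1 + c))
  · intro n
    have : 0 < (n : ℝ) + 1 + c := by linarith [Nat.cast_nonneg (α := ℝ) n]
    rw [sub_nonneg]
    gcongr
    simp

/-- The trivial zero `-2(n + 1)` of `ζ`. -/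
def trivialZero (n : ℕ) : riemannZetaZeros :=
  ⟨-2 * (n + 1), riemannZeta_neg_two_mul_nat_add_one n⟩

lemma trivialZero_injective : Function.Injective trivialZero := fun m n h ↦ by
  simpa [trivialZero] using h

lemma zetaNontrivZero_or_exists_eq_trivialZero (ρ : riemannZetaZeros) :
    ZetaNontrivZero ρ ∨ ∃ n, ρ = trivialZero n :=
  (zetaNontrivZero_or_exists_eq_neg_two_mul ρ.2).imp_right fun ⟨n, hn⟩ ↦ ⟨n, Subtype.ext hn⟩

lemma re_le_one_of_mem_riemannZetaZeros (ρ : riemannZetaZeros) : (ρ : ℂ).re ≤ 1 :=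
  not_lt.1 fun h ↦ riemannZeta_ne_zero_of_one_lt_re h ρ.2

theorem summable_norm_zetaMult_mul_montgomeryKernel (t : ℝ) :
    Summable fun ρ : riemannZetaZeros ↦ ‖(zetaMult ρ : ℂ) * montgomeryKernel t ρ‖ := by
  classical
  have htriv : Summable fun n ↦ ‖montgomeryKernel t (trivialZero n)‖ :=
    .of_nonneg_of_le (fun _ ↦ norm_nonneg _) (norm_montgomeryKernel_neg_two_mul_le t)
      ((hasSum_one_div_sub_one_div_succ (by linarith [abs_nonneg t])).mul_left 4).summable
  have hlim := tendsto_sum_zetaMult_mul_poleKernel (a := 3 / 2 + I * t) (b := -1 / 2 + I * t)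
    (riemannZeta_ne_zero_of_one_lt_re (by norm_num))
    (riemannZeta_ne_zero_of_re_eq_neg_half (by norm_num))
  simp only [← montgomeryKernel.eq_1] at hlim
  refine summable_norm_of_norm_le_mul_re_add (tendsto_zerosInBall _) hlim (C := 2)
    ((trivialZero_injective.summable_iff fun ρ hρ ↦ indicator_of_notMem hρ
        fun ρ ↦ 3 * ‖montgomeryKernel t ρ‖).1 ?_) fun ρ ↦ ?_
  · simpa [Function.comp_def] using htriv.mul_left 3
  · obtain hρ | ⟨n, rfl⟩ := zetaNontrivZero_or_exists_eq_trivialZero ρ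
    · have hK := norm_montgomeryKernel_le_two_mul_re t hρ.2.1.le hρ.2.2.le
      have hind : 0 ≤ (range trivialZero).indicator (fun ρ ↦ 3 * ‖montgomeryKernel t ρ‖) ρ :=
        indicator_nonneg (fun _ _ ↦ by positivity) _
      rw [norm_mul, Complex.norm_natCast, ← ofReal_natCast, re_ofReal_mul]
      nlinarith [mul_le_mul_of_nonneg_left hK (zetaMult ρ).cast_nonneg]
    · have hK := neg_le_of_abs_le (abs_re_le_norm (montgomeryKernel t (trivialZero n)))
      rw [indicator_of_mem (mem_range_self n), show zetaMult (trivialZero n) = 1 from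
        zetaMult_neg_two_mul n, Nat.cast_one, one_mul]
      linarith

end SumsOverZeros

section FourierUniqueness

open scoped FourierTransform

/-- `f` is a continuous integrable function on the line whose Fourier transform, in the
normalization `𝓕 f w = ∫ exp (-2πiuw) f u du`, is `v`. -/
structure HasFourierIntegral (f v : ℝ → ℂ) : Prop where
  continuous : Continuous f
  integrable : Integrable f
  fourier_eq : 𝓕 f = v

namespace HasFourierIntegral

variable {f g v w : ℝ → ℂ}

lemma add (hf : HasFourierIntegral f v) (hg : HasFourierIntegral g w) :
    HasFourierIntegral (f + g) (v + w) where
  continuous := hf.continuous.add hg.continuous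
  integrable := hf.integrable.add hg.integrable
  fourier_eq := by
    rw [← hf.fourier_eq, ← hg.fourier_eq]
    exact VectorFourier.fourierIntegral_add Real.continuous_fourierChar
      (L := innerₗ ℝ) continuous_inner hf.integrable hg.integrable

lemma const_mul (c : ℂ) (hf : HasFourierIntegral f v) :
    HasFourierIntegral (fun u ↦ c * f u) (fun ξ ↦ c * v ξ) where
  continuous := hf.continuous.const_mul c
  integrable := hf.integrable.const_mul c
  fourier_eq := by
    rw [← hf.fourier_eq]
    exact VectorFourier.fourierIntegral_const_smul Real.fourierChar volume (innerₗ ℝ) f c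

lemma comp_sub_right (b : ℝ) (hf : HasFourierIntegral f v) :
    HasFourierIntegral (fun u ↦ f (u - b)) (fun ξ ↦ 𝐞 (-(b * ξ)) * v ξ) where
  continuous := hf.continuous.comp (by fun_prop)
  integrable := hf.integrable.comp_sub_right b
  fourier_eq := by
    rw [← hf.fourier_eq]
    ext ξ
    have h := congrFun (VectorFourier.fourierIntegral_comp_add_right Real.fourierChar volume
      (innerₗ ℝ) f (-b)) ξ
    rw [map_neg, LinearMap.neg_apply] at h
    rw [mul_comm b]
    exact h

lemma norm_le (hf : HasFourierIntegral f v) (ξ : ℝ) : ‖v ξ‖ ≤ ∫ u, ‖f u‖ :=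
  hf.fourier_eq ▸ VectorFourier.norm_fourierIntegral_le_integral_norm _ _ _ _ _

lemma eq_zero (hf : HasFourierIntegral f v) (hv : v = 0) : f = 0 := by
  subst hv
  have h := hf.continuous.fourierInv_fourier_eq hf.integrable
    (by rw [hf.fourier_eq]; exact integrable_zero _ _ _)
  rw [← h, hf.fourier_eq]
  ext u
  simp [Real.fourierInv_eq]

end HasFourierIntegral

lemma integrable_tsum_of_summable_integral_norm {ι : Type*} [Countable ι] {F : ι → ℝ → ℂ}
    (hF : ∀ i, Integrable (F i)) (hs : Summable fun i ↦ ∫ u, ‖F i u‖)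
    (hm : AEStronglyMeasurable fun u ↦ ∑' i, F i u) : Integrable fun u ↦ ∑' i, F i u := by
  refine ⟨hm, ?_⟩
  calc ∫⁻ u, ‖∑' i, F i u‖ₑ ≤ ∫⁻ u, ∑' i, ‖F i u‖ₑ :=
        lintegral_mono fun u ↦ enorm_tsum_le_tsum_enorm
    _ = ∑' i, ∫⁻ u, ‖F i u‖ₑ := lintegral_tsum fun i ↦ (hF i).1.enorm
    _ = ∑' i, ENNReal.ofReal (∫ u, ‖F i u‖) :=
        tsum_congr fun i ↦ (ofReal_integral_norm_eq_lintegral_enorm (hF i)).symm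
    _ = ENNReal.ofReal (∑' i, ∫ u, ‖F i u‖) :=
        (ENNReal.ofReal_tsum_of_nonneg (fun i ↦ integral_nonneg fun u ↦ norm_nonneg _) hs).symm
    _ < ⊤ := ENNReal.ofReal_lt_top

variable {ι : Type*} {c : ι → ℂ} {f v : ι → ℝ → ℂ} {M B : ℝ}

lemma HasFourierIntegral.summable_mul (hc : Summable fun i ↦ ‖c i‖)
    (hf : ∀ i, HasFourierIntegral (f i) (v i)) (hB : ∀ i, ∫ u, ‖f i u‖ ≤ B) (ξ : ℝ) :
    Summable fun i ↦ c i * v i ξ :=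
  .of_norm_bounded (hc.mul_right B) fun i ↦ by
    rw [norm_mul]
    gcongr
    exact ((hf i).norm_le ξ).trans (hB i)

lemma HasFourierIntegral.tsum_mul [Countable ι] (hc : Summable fun i ↦ ‖c i‖)
    (hf : ∀ i, HasFourierIntegral (f i) (v i)) (hM : ∀ i u, ‖f i u‖ ≤ M)
    (hB : ∀ i, ∫ u, ‖f i u‖ ≤ B) :
    HasFourierIntegral (fun u ↦ ∑' i, c i * f i u) (fun ξ ↦ ∑' i, c i * v i ξ) := by
  have hcont : Continuous fun u ↦ ∑' i, c i * f i u :=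
    continuous_tsum (fun i ↦ (hf i).continuous.const_mul (c i)) (hc.mul_right M) fun i u ↦ by
      rw [norm_mul]
      gcongr
      exact hM i u
  have hint (i : ι) : Integrable fun u ↦ c i * f i u := (hf i).integrable.const_mul (c i)
  have hsum : Summable fun i ↦ ∫ u, ‖c i * f i u‖ := by
    refine .of_nonneg_of_le (fun i ↦ integral_nonneg fun u ↦ norm_nonneg _) (fun i ↦ ?_)
      (hc.mul_right B)
    simp_rw [norm_mul, integral_const_mul]
    gcongr
    exact hB i
  refine ⟨hcont, integrable_tsum_of_summable_integral_norm hint hsum hcont.aestronglyMeasurable, ?_⟩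
  ext ξ
  have h := hasSum_integral_of_summable_integral_norm
    (F := fun i u ↦ 𝐞 (-(u * ξ)) • (c i * f i u))
    (fun i ↦ by simpa [mul_comm] using (Real.fourierIntegral_convergent_iff ξ).2 (hint i))
    (by simpa only [Circle.norm_smul] using hsum)
  calc 𝓕 (fun u ↦ ∑' i, c i * f i u) ξ = ∫ u, ∑' i, 𝐞 (-(u * ξ)) • (c i * f i u) := by
        simp_rw [Real.fourier_real_eq, Circle.smul_def, smul_eq_mul, tsum_mul_left]
    _ = ∑' i, 𝓕 (fun u ↦ c i * f i u) ξ := by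
        rw [← h.tsum_eq]
        simp_rw [Real.fourier_real_eq]
    _ = ∑' i, c i * v i ξ := by simp_rw [((hf _).const_mul (c _)).fourier_eq]

end FourierUniqueness

section TwoSidedExp

/-- The continuous function equal to `exp (a * u)` for `u ≥ 0` and to `exp (b * u)` for `u ≤ 0`. -/
def twoSidedExp (a b : ℂ) (u : ℝ) : ℂ := if 0 ≤ u then cexp (a * u) else cexp (b * u)

variable {a b : ℂ}

lemma twoSidedExp_of_nonneg {u : ℝ} (hu : 0 ≤ u) : twoSidedExp a b u = cexp (a * u) := if_pos hu

lemma twoSidedExp_of_nonpos {u : ℝ} (hu : u ≤ 0) : twoSidedExp a b u = cexp (b * u) := by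
  obtain hu | rfl := hu.lt_or_eq
  · exact if_neg hu.not_ge
  · simp [twoSidedExp]

lemma continuous_twoSidedExp (a b : ℂ) : Continuous (twoSidedExp a b) :=
  Continuous.if_le (by fun_prop) (by fun_prop) (by fun_prop) (by fun_prop)
    fun u hu ↦ by simp [← hu]

lemma exp_neg_mul_twoSidedExp (s : ℂ) (u : ℝ) :
    cexp (-s * u) * twoSidedExp a b u = twoSidedExp (a - s) (b - s) u := by
  unfold twoSidedExp
  split_ifs <;> rw [← Complex.exp_add] <;> ring_nf

lemma norm_twoSidedExp (a b : ℂ) (u : ℝ) : (‖twoSidedExp a b u‖ : ℂ) = twoSidedExp a.re b.re u := by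
  unfold twoSidedExp
  split_ifs <;> simp [Complex.norm_exp]

lemma norm_twoSidedExp_le_one (ha : a.re ≤ 0) (hb : 0 ≤ b.re) (u : ℝ) :
    ‖twoSidedExp a b u‖ ≤ 1 := by
  obtain hu | hu := le_total 0 u
  · rw [twoSidedExp_of_nonneg hu, Complex.norm_exp, Real.exp_le_one_iff, re_mul_ofReal]
    exact mul_nonpos_of_nonpos_of_nonneg ha hu
  · rw [twoSidedExp_of_nonpos hu, Complex.norm_exp, Real.exp_le_one_iff, re_mul_ofReal]
    exact mul_nonpos_of_nonneg_of_nonpos hb hu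

lemma integrable_twoSidedExp (ha : a.re < 0) (hb : 0 < b.re) : Integrable (twoSidedExp a b) := by
  rw [← integrableOn_univ, ← Iic_union_Ioi (a := (0 : ℝ))]
  exact ((integrableOn_exp_mul_complex_Iic hb 0).congr_fun
      (fun u hu ↦ (twoSidedExp_of_nonpos hu).symm) measurableSet_Iic).union
    ((integrableOn_exp_mul_complex_Ioi ha 0).congr_fun
      (fun u hu ↦ (twoSidedExp_of_nonneg (mem_Ioi.1 hu).le).symm) measurableSet_Ioi)

lemma integral_twoSidedExp (ha : a.re < 0) (hb : 0 < b.re) :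
    ∫ u, twoSidedExp a b u = poleKernel b a 0 := by
  have hab := integrable_twoSidedExp ha hb
  rw [← intervalIntegral.integral_Iic_add_Ioi (b := 0) hab.integrableOn hab.integrableOn,
    setIntegral_congr_fun measurableSet_Iic fun u hu ↦ twoSidedExp_of_nonpos hu,
    setIntegral_congr_fun measurableSet_Ioi fun u hu ↦ twoSidedExp_of_nonneg (mem_Ioi.1 hu).le,
    integral_exp_mul_complex_Iic hb, integral_exp_mul_complex_Ioi ha,
    poleKernel_eq_sub (by rintro rfl; simp at hb) (by rintro rfl; simp at ha)]
  simp [neg_div, sub_eq_add_neg]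

lemma integral_norm_twoSidedExp (ha : a.re < 0) (hb : 0 < b.re) :
    ∫ u, ‖twoSidedExp a b u‖ = (b.re)⁻¹ - (a.re)⁻¹ := by
  have h := integral_twoSidedExp (a := a.re) (b := b.re) (by simpa) (by simpa)
  rw [poleKernel_eq_sub (by simpa using hb.ne') (by simpa using ha.ne)] at h
  simp_rw [← norm_twoSidedExp, integral_complex_ofReal] at h
  simp only [sub_zero, one_div] at h
  exact_mod_cast h

lemma hasFourierIntegral_twoSidedExp (ha : a.re < 0) (hb : 0 < b.re) :
    HasFourierIntegral (twoSidedExp a b) fun ξ ↦ poleKernel b a (2 * π * ξ * I) where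
  continuous := continuous_twoSidedExp a b
  integrable := integrable_twoSidedExp ha hb
  fourier_eq := by
    ext ξ
    calc _ = ∫ u : ℝ, cexp (-(2 * π * ξ * I) * u) * twoSidedExp a b u := by
          rw [Real.fourier_real_eq_integral_exp_smul]
          congr with u
          rw [smul_eq_mul]
          push_cast
          ring_nf
      _ = poleKernel (b - 2 * π * ξ * I) (a - 2 * π * ξ * I) 0 := by
          simp_rw [exp_neg_mul_twoSidedExp]
          exact integral_twoSidedExp (by simpa) (by simpa)
      _ = poleKernel b a (2 * π * ξ * I) := by
          simp only [poleKernel]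
          ring_nf

end TwoSidedExp

section ExplicitFormula

open scoped FourierTransform ArithmeticFunction.vonMangoldt

lemma poleKernel_mul_poleKernel {a b p s : ℂ} (hp : a ≠ p) (hs : s ≠ b) :
    poleKernel a b p * poleKernel a p s = poleKernel a b s * poleKernel s b p := by
  have hp' := sub_ne_zero.2 hp
  have hs' := sub_ne_zero.2 hs
  simp only [poleKernel, div_mul_div_comm]
  rw [show (a - b) * (a - p) / ((a - p) * (p - b) * ((a - s) * (s - p)))
      = (a - b) / ((p - b) * ((a - s) * (s - p))) by field_simp,
    show (a - b) * (s - b) / ((a - s) * (s - b) * ((s - p) * (p - b)))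
      = (a - b) / ((a - s) * ((s - p) * (p - b))) by field_simp]
  ring_nf

/-- The function whose Fourier transform is the Montgomery kernel of pole `p`, restricted to the
line `re s = 5/4`. Any abscissa strictly between `1` and `3/2` would do: it has to separate the pole
`3/2 + it` of the kernel from the zeros and the pole of `ζ`. -/
def montgomeryExp (t : ℝ) (p : ℂ) : ℝ → ℂ := twoSidedExp (p - 5 / 4) (1 / 4 + I * t)

variable {p : ℂ}

lemma hasFourierIntegral_montgomeryExp (t : ℝ) (hp : p.re ≤ 1) :
    HasFourierIntegral (montgomeryExp t p)
      fun ξ ↦ poleKernel (3 / 2 + I * t) p (5 / 4 + 2 * π * ξ * I) := by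
  have hK (ξ : ℝ) : poleKernel (3 / 2 + I * t) p (5 / 4 + 2 * π * ξ * I) =
      poleKernel (1 / 4 + I * t) (p - 5 / 4) (2 * π * ξ * I) := by
    simp only [poleKernel]
    ring_nf
  simp only [hK]
  exact hasFourierIntegral_twoSidedExp (a := p - 5 / 4) (b := 1 / 4 + I * t)
    (by simp; linarith) (by simp)

lemma norm_montgomeryExp_le_one (t : ℝ) (hp : p.re ≤ 1) (u : ℝ) : ‖montgomeryExp t p u‖ ≤ 1 :=
  norm_twoSidedExp_le_one (by simp; linarith) (by simp) u

lemma integral_norm_montgomeryExp_le (t : ℝ) (hp : p.re ≤ 1) :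
    ∫ u, ‖montgomeryExp t p u‖ ≤ 8 := by
  have ha : (p - 5 / 4).re ≤ -1 / 4 := by simp; linarith
  have hb : (1 / 4 + I * t).re = 1 / 4 := by simp
  simp only [montgomeryExp]
  rw [integral_norm_twoSidedExp (by linarith) (by simp), hb]
  have := inv_anti₀ (by norm_num) (neg_le_neg ha)
  rw [inv_neg] at this
  norm_num at this ⊢
  linarith

lemma re_neg_half_add_le_one (t : ℝ) : (-1 / 2 + I * t : ℂ).re ≤ 1 := by norm_num

lemma ofReal_cpow_eq_exp {x : ℝ} (hx : 0 < x) (z : ℂ) : (x : ℂ) ^ z = cexp (z * Real.log x) := by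
  rw [cpow_def_of_ne_zero (by exact_mod_cast hx.ne'), ofReal_log hx.le, mul_comm]

lemma vonMangoldt_mul_rpow_mul_fourierChar (σ ξ : ℝ) (n : ℕ) :
    ((Λ n * (n : ℝ) ^ (-σ) : ℝ) : ℂ) * 𝐞 (-(Real.log n * ξ)) =
      LSeries.term (fun n ↦ (Λ n : ℂ)) (σ + 2 * π * ξ * I) n := by
  obtain rfl | hn := Nat.eq_zero_or_pos n
  · simp
  · have hn' : (0 : ℝ) < n := by exact_mod_cast hn
    rw [LSeries.term_of_ne_zero hn.ne', div_eq_mul_inv, ← cpow_neg, ← ofReal_natCast n,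
      ofReal_mul, ofReal_cpow hn'.le, ofReal_cpow_eq_exp hn', ofReal_cpow_eq_exp hn',
      Real.fourierChar_apply, mul_assoc, ← Complex.exp_add]
    congr 2
    push_cast
    ring

lemma summable_norm_vonMangoldt_mul_rpow {σ : ℝ} (hσ : 1 < σ) :
    Summable fun n : ℕ ↦ ‖((Λ n * (n : ℝ) ^ (-σ) : ℝ) : ℂ)‖ := by
  have h := (ArithmeticFunction.LSeriesSummable_vonMangoldt (s := σ) (by simpa)).norm
  refine h.congr fun n ↦ ?_
  simpa using congrArg norm (vonMangoldt_mul_rpow_mul_fourierChar σ 0 n).symm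

lemma hasFourierIntegral_tsum_vonMangoldt (t : ℝ) :
    HasFourierIntegral
      (fun u ↦ ∑' n : ℕ, ((Λ n * (n : ℝ) ^ (-(5 / 4) : ℝ) : ℝ) : ℂ) *
        montgomeryExp t (-1 / 2 + I * t) (u - Real.log n))
      (fun ξ ↦ -logDeriv riemannZeta (5 / 4 + 2 * π * ξ * I) *
        montgomeryKernel t (5 / 4 + 2 * π * ξ * I)) := by
  have h := HasFourierIntegral.tsum_mul (M := 1) (B := 8)
    (summable_norm_vonMangoldt_mul_rpow (σ := 5 / 4) (by norm_num))
    (fun n ↦ (hasFourierIntegral_montgomeryExp t (re_neg_half_add_le_one t)).comp_sub_right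
      (Real.log n))
    (fun n u ↦ norm_montgomeryExp_le_one t (re_neg_half_add_le_one t) _) fun n ↦ by
      rw [integral_sub_right_eq_self fun u ↦ ‖montgomeryExp t (-1 / 2 + I * t) u‖]
      exact integral_norm_montgomeryExp_le t (re_neg_half_add_le_one t)
  convert h using 2 with ξ
  have hΛ := ArithmeticFunction.LSeries_vonMangoldt_eq_deriv_riemannZeta_div
    (s := 5 / 4 + 2 * π * ξ * I) (by norm_num)
  simp_rw [← mul_assoc, vonMangoldt_mul_rpow_mul_fourierChar]
  rw [tsum_mul_right, logDeriv_apply, ← neg_div, ← hΛ, LSeries, montgomeryKernel]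
  norm_num

lemma five_div_four_add_re (ξ : ℝ) : (5 / 4 + 2 * π * ξ * I : ℂ).re = 5 / 4 := by simp

lemma hasFourierIntegral_tsum_zeros (t : ℝ) :
    HasFourierIntegral
      (fun u ↦ ∑' ρ : riemannZetaZeros, zetaMult ρ * montgomeryKernel t ρ * montgomeryExp t ρ u)
      (fun ξ ↦ montgomeryKernel t (5 / 4 + 2 * π * ξ * I) *
        (logDeriv riemannZeta₁ (5 / 4 + 2 * π * ξ * I) -
          logDeriv riemannZeta₁ (-1 / 2 + I * t))) := by
  have hre := re_le_one_of_mem_riemannZetaZeros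
  have hsum := summable_norm_zetaMult_mul_montgomeryKernel t
  have hexp (ρ : riemannZetaZeros) := hasFourierIntegral_montgomeryExp t (hre ρ)
  have hint (ρ : riemannZetaZeros) := integral_norm_montgomeryExp_le t (hre ρ)
  convert HasFourierIntegral.tsum_mul hsum hexp
    (fun ρ ↦ norm_montgomeryExp_le_one t (hre ρ)) hint using 2 with ξ
  have hsumξ := HasFourierIntegral.summable_mul hsum hexp hint ξ
  set s : ℂ := 5 / 4 + 2 * π * ξ * I
  have hs_re : s.re = 5 / 4 := five_div_four_add_re ξ
  have hsb : s ≠ -1 / 2 + I * t := fun h ↦ by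
    have := congrArg re h; rw [hs_re] at this; norm_num at this
  have hsa : 3 / 2 + I * t ≠ s := fun h ↦ by
    have := congrArg re h; rw [hs_re] at this; norm_num at this
  have hcocycle (ρ : riemannZetaZeros) : zetaMult ρ * montgomeryKernel t ρ *
      poleKernel (3 / 2 + I * t) ρ s =
        montgomeryKernel t s * (zetaMult ρ * poleKernel s (-1 / 2 + I * t) ρ) := by
    rw [mul_assoc, montgomeryKernel, poleKernel_mul_poleKernel _ hsb, ← montgomeryKernel,
      mul_left_comm]
    rintro h
    have := hre ρ
    rw [← h] at this
    norm_num at this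
  have hK : montgomeryKernel t s ≠ 0 := by
    rw [montgomeryKernel_eq_div]
    exact div_ne_zero two_ne_zero (mul_ne_zero (sub_ne_zero.2 hsa) (sub_ne_zero.2 hsb))
  simp_rw [hcocycle] at hsumξ ⊢
  rw [tsum_mul_left, (hasSum_zetaMult_mul_poleKernel
    (riemannZeta_ne_zero_of_one_lt_re (by rw [hs_re]; norm_num))
    (riemannZeta_ne_zero_of_re_eq_neg_half (by norm_num))
    ((summable_mul_left_iff hK).1 hsumξ)).tsum_eq]

theorem tsum_vonMangoldt_mul_montgomeryExp_add_tsum_zeros_eq_zero (t u : ℝ) :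
    (∑' n : ℕ, ((Λ n * (n : ℝ) ^ (-(5 / 4) : ℝ) : ℝ) : ℂ) *
        montgomeryExp t (-1 / 2 + I * t) (u - Real.log n)) +
      logDeriv riemannZeta (-1 / 2 + I * t) * montgomeryExp t (-1 / 2 + I * t) u +
      -montgomeryKernel t 1 * montgomeryExp t 1 u +
      ∑' ρ : riemannZetaZeros, zetaMult ρ * montgomeryKernel t ρ * montgomeryExp t ρ u = 0 := by
  have h := (((hasFourierIntegral_tsum_vonMangoldt t).add
    ((hasFourierIntegral_montgomeryExp t (re_neg_half_add_le_one t)).const_mul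
      (logDeriv riemannZeta (-1 / 2 + I * t)))).add
    ((hasFourierIntegral_montgomeryExp t one_re.le).const_mul (-montgomeryKernel t 1))).add
    (hasFourierIntegral_tsum_zeros t)
  refine congrFun (h.eq_zero ?_) u
  ext ξ
  have hs_re := five_div_four_add_re ξ
  simp only [Pi.add_apply, Pi.zero_apply]
  set s : ℂ := 5 / 4 + 2 * π * ξ * I
  have hs : s ≠ 1 := fun h ↦ by norm_num [h] at hs_re
  have hsb : s ≠ -1 / 2 + I * t := fun h ↦ by norm_num [h] at hs_re
  have hb : -1 / 2 + I * t ≠ 1 := fun h ↦ by have := congrArg re h; norm_num at this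
  have ha : 3 / 2 + I * t ≠ 1 := fun h ↦ by have := congrArg re h; norm_num at this
  have hpole : montgomeryKernel t 1 * poleKernel (3 / 2 + I * t) 1 s =
      montgomeryKernel t s * (1 / (s - 1) - 1 / (-1 / 2 + I * t - 1)) := by
    rw [montgomeryKernel, poleKernel_mul_poleKernel ha hsb, poleKernel_eq_sub hs hb,
      montgomeryKernel]
  rw [neg_mul (montgomeryKernel t 1), hpole, ← montgomeryKernel,
    logDeriv_riemannZeta₁ hs (riemannZeta_ne_zero_of_one_lt_re (by rw [hs_re]; norm_num)),
    logDeriv_riemannZeta₁ hb (riemannZeta_ne_zero_of_re_eq_neg_half (by norm_num))]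
  ring

variable {x : ℝ}

lemma ofReal_aWeight (hx : 0 < x) {n : ℕ} (hn : 0 < n) :
    (aWeight n x : ℂ) = twoSidedExp (-1 / 2) (3 / 2) (Real.log x - Real.log n) := by
  have hn' : (0 : ℝ) < n := by exact_mod_cast hn
  have hleft : ((n : ℝ) / x) ^ ((1 : ℝ) / 2) =
      Real.exp (-1 / 2 * (Real.log x - Real.log n)) := by
    rw [Real.rpow_def_of_pos (by positivity), Real.log_div hn'.ne' hx.ne']
    ring_nf
  have hright : (x / n : ℝ) ^ ((3 : ℝ) / 2) = Real.exp (3 / 2 * (Real.log x - Real.log n)) := by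
    rw [Real.rpow_def_of_pos (by positivity), Real.log_div hx.ne' hn'.ne']
    ring_nf
  rw [aWeight, hleft, hright]
  obtain hu | hu := le_total 0 (Real.log x - Real.log n)
  · rw [twoSidedExp_of_nonneg hu, min_eq_left (Real.exp_le_exp.2 (by linarith))]
    push_cast
    rfl
  · rw [twoSidedExp_of_nonpos hu, min_eq_right (Real.exp_le_exp.2 (by linarith))]
    push_cast
    rfl

lemma cpow_mul_vonMangoldt_mul_montgomeryExp (hx : 0 < x) (t : ℝ) (n : ℕ) :
    (x : ℂ) ^ (5 / 4 - I * t) * (((Λ n * (n : ℝ) ^ (-(5 / 4) : ℝ) : ℝ) : ℂ) *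
      montgomeryExp t (-1 / 2 + I * t) (Real.log x - Real.log n)) =
        ((Λ n * aWeight n x : ℝ) : ℂ) * (n : ℂ) ^ (-(I * t)) := by
  obtain rfl | hn := Nat.eq_zero_or_pos n
  · simp
  have hn' : (0 : ℝ) < n := by exact_mod_cast hn
  have hpow : (x : ℂ) ^ (5 / 4 - I * t) * (((n : ℝ) ^ (-(5 / 4) : ℝ) : ℝ) : ℂ) =
      cexp (-(I * t - 5 / 4) * (Real.log x - Real.log n : ℝ)) * (n : ℂ) ^ (-(I * t)) := by
    rw [ofReal_cpow hn'.le, ofReal_cpow_eq_exp hx, ofReal_cpow_eq_exp hn', ← ofReal_natCast n,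
      ofReal_cpow_eq_exp hn', ← Complex.exp_add, ← Complex.exp_add]
    push_cast
    ring_nf
  have hexp : cexp (-(I * t - 5 / 4) * (Real.log x - Real.log n : ℝ)) *
      montgomeryExp t (-1 / 2 + I * t) (Real.log x - Real.log n) = aWeight n x := by
    rw [montgomeryExp, exp_neg_mul_twoSidedExp, ofReal_aWeight hx hn]
    ring_nf
  rw [ofReal_mul, ofReal_mul, ← hexp]
  linear_combination (Λ n : ℂ) * montgomeryExp t (-1 / 2 + I * t) (Real.log x - Real.log n) * hpow

lemma cpow_mul_mul_montgomeryExp_log (hx : 1 ≤ x) (t : ℝ) (p c : ℂ) :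
    (x : ℂ) ^ (5 / 4 - I * t) * (c * montgomeryExp t p (Real.log x)) =
      c * (x : ℂ) ^ (p - I * t) := by
  have hx' : 0 < x := by linarith
  rw [mul_left_comm, montgomeryExp, twoSidedExp_of_nonneg (Real.log_nonneg hx),
    ofReal_cpow_eq_exp hx', ofReal_cpow_eq_exp hx', ← Complex.exp_add]
  ring_nf

theorem montgomery_exact_formula (hx : 1 ≤ x) (t : ℝ) :
    (∑' n : ℕ, ((Λ n * aWeight n x : ℝ) : ℂ) * (n : ℂ) ^ (-(I * t))) +
      logDeriv riemannZeta (-1 / 2 + I * t) * (x : ℂ) ^ (-1 / 2 : ℂ) -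
      montgomeryKernel t 1 * (x : ℂ) ^ (1 - I * t) +
      ∑' ρ : riemannZetaZeros, zetaMult ρ * montgomeryKernel t ρ * (x : ℂ) ^ (ρ - I * t) = 0 := by
  have h := congrArg ((x : ℂ) ^ (5 / 4 - I * t) * ·)
    (tsum_vonMangoldt_mul_montgomeryExp_add_tsum_zeros_eq_zero t (Real.log x))
  simp only [mul_add, mul_zero, ← tsum_mul_left, cpow_mul_mul_montgomeryExp_log hx,
    cpow_mul_vonMangoldt_mul_montgomeryExp (zero_lt_one.trans_le hx)] at h
  rwa [neg_mul, ← sub_eq_add_neg, add_sub_cancel_right] at h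

lemma summable_zetaMult_mul_montgomeryKernel_mul_cpow (hx : 1 ≤ x) (t : ℝ) :
    Summable fun ρ : riemannZetaZeros ↦
      zetaMult ρ * montgomeryKernel t ρ * (x : ℂ) ^ (ρ - I * t) := by
  refine .of_norm_bounded ((summable_norm_zetaMult_mul_montgomeryKernel t).mul_right x) fun ρ ↦ ?_
  rw [norm_mul, norm_cpow_eq_rpow_re_of_pos (zero_lt_one.trans_le hx)]
  gcongr
  refine (Real.rpow_le_rpow_of_exponent_le hx ?_).trans_eq (Real.rpow_one x)
  simpa using re_le_one_of_mem_riemannZetaZeros ρ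

lemma tsum_riemannZetaZeros_eq_add {g : ℂ → ℂ} (hg : Summable fun ρ : riemannZetaZeros ↦ g ρ) :
    ∑' ρ : riemannZetaZeros, g ρ =
      (∑' ρ : {ρ : ℂ // ZetaNontrivZero ρ}, g ρ) + ∑' n : ℕ, g (-2 * (n + 1)) := by
  let j (ρ : {ρ : ℂ // ZetaNontrivZero ρ}) : riemannZetaZeros := ⟨ρ, ρ.2.1⟩
  have hj : Function.Injective j := fun ρ ρ' h ↦
    Subtype.ext (congrArg (fun z : riemannZetaZeros ↦ (z : ℂ)) h)
  have hcompl : IsCompl (range j) (range trivialZero) := by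
    refine ⟨disjoint_left.2 ?_, codisjoint_iff_le_sup.2 fun ρ _ ↦ ?_⟩
    · rintro _ ⟨ρ, rfl⟩ ⟨n, hn⟩
      have h := congrArg (fun z : riemannZetaZeros ↦ (z : ℂ).re) hn
      have := ρ.2.2.1
      simp [trivialZero, j] at h
      linarith
    · obtain h | ⟨n, rfl⟩ := zetaNontrivZero_or_exists_eq_trivialZero ρ
      · exact .inl ⟨⟨ρ, h⟩, rfl⟩
      · exact .inr ⟨n, rfl⟩
  exact (HasSum.add_isCompl hcompl (hj.hasSum_range_iff.2 (hg.comp_injective hj).hasSum)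
    (trivialZero_injective.hasSum_range_iff.2
      (hg.comp_injective trivialZero_injective).hasSum)).tsum_eq

lemma norm_tsum_montgomeryKernel_neg_two_mul_le (hx : 1 ≤ x) (t : ℝ) :
    ‖∑' n : ℕ, montgomeryKernel t (-2 * (n + 1)) * (x : ℂ) ^ (-2 * (n + 1) - I * t)‖ ≤
      8 * (x ^ (-2 : ℝ) / (|t| + 2)) := by
  have hx' : 0 < x := by linarith
  have ht : -1 < |t| := by linarith [abs_nonneg t]
  have hsum := ((hasSum_one_div_sub_one_div_succ ht).mul_left 4).mul_right (x ^ (-2 : ℝ))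
  calc _ ≤ 4 * (1 / (1 + |t|)) * x ^ (-2 : ℝ) := tsum_of_norm_bounded hsum fun n ↦ by
        rw [norm_mul, norm_cpow_eq_rpow_re_of_pos hx']
        refine mul_le_mul (norm_montgomeryKernel_neg_two_mul_le t n)
          (Real.rpow_le_rpow_of_exponent_le hx ?_) (by positivity)
          ((norm_nonneg _).trans (norm_montgomeryKernel_neg_two_mul_le t n))
        simp
    _ ≤ 8 / (|t| + 2) * x ^ (-2 : ℝ) := by
        gcongr
        rw [mul_one_div, div_le_div_iff₀ (by positivity) (by positivity)]
        linarith [abs_nonneg t]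
    _ = _ := by ring

lemma montgomeryKernel_one (t : ℝ) :
    montgomeryKernel t 1 = 2 / ((1 / 2 + I * t) * (3 / 2 - I * t)) := by
  rw [montgomeryKernel_eq_div]
  ring_nf

lemma exists_norm_logDeriv_riemannZeta_neg_half_add_log_le :
    ∃ C : ℝ, ∀ t : ℝ, ‖logDeriv riemannZeta (-1 / 2 + I * t) + Real.log (|t| + 2)‖ ≤ C := by
  refine ⟨Real.log (2 * π) + 7 + ∑' n, ‖LSeries.term (fun n ↦ (Λ n : ℂ)) (3 / 2 : ℝ) n‖,
    fun t ↦ ?_⟩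
  have h := norm_logDeriv_riemannZeta_one_sub_add_log_le (s := 3 / 2 - I * t) (by simp)
  rwa [show (1 - (3 / 2 - I * t) : ℂ) = -1 / 2 + I * t by ring,
    show |(3 / 2 - I * t : ℂ).im| = |t| by simp] at h

theorem montgomery_explicit_formula_general :
    ∃ C : ℝ, 0 < C ∧ ∀ x : ℝ, 1 ≤ x → ∀ t : ℝ,
      ‖(∑' ρ : {ρ : ℂ // ZetaNontrivZero ρ},
            zetaMult ρ * montgomeryKernel t ρ * (x : ℂ) ^ ((ρ : ℂ) - I * t))
        + (∑' n : ℕ, ((Λ n * aWeight n x : ℝ) : ℂ) * (n : ℂ) ^ (-(I * t)))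
        - 2 * (x : ℂ) ^ (1 - I * t) / ((1 / 2 + I * t) * (3 / 2 - I * t))
        - ((x ^ (-(1 / 2) : ℝ) * Real.log (|t| + 2) : ℝ) : ℂ)‖
      ≤ C * (x ^ (-(1 / 2) : ℝ) + x ^ (-(2 : ℝ)) / (|t| + 2)) := by
  obtain ⟨C, hC⟩ := exists_norm_logDeriv_riemannZeta_neg_half_add_log_le
  refine ⟨max C 8, by positivity, fun x hx t ↦ ?_⟩
  have hx' : 0 < x := by linarith
  have hpow : ((x ^ (-(1 / 2) : ℝ) : ℝ) : ℂ) = (x : ℂ) ^ (-1 / 2 : ℂ) := by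
    rw [ofReal_cpow hx'.le]
    norm_num
  have hexact := montgomery_exact_formula hx t
  rw [tsum_riemannZetaZeros_eq_add (g := fun ρ ↦ zetaMult ρ * montgomeryKernel t ρ *
    (x : ℂ) ^ (ρ - I * t)) (summable_zetaMult_mul_montgomeryKernel_mul_cpow hx t),
    montgomeryKernel_one, div_mul_eq_mul_div] at hexact
  simp only [zetaMult_neg_two_mul, Nat.cast_one, one_mul, ← hpow] at hexact
  have htriv := norm_tsum_montgomeryKernel_neg_two_mul_le hx t
  set T := ∑' n : ℕ, montgomeryKernel t (-2 * (n + 1)) * (x : ℂ) ^ (-2 * (n + 1) - I * t)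
  calc _ = ‖-((logDeriv riemannZeta (-1 / 2 + I * t) + Real.log (|t| + 2)) *
          (x ^ (-(1 / 2) : ℝ) : ℝ)) - T‖ := by
        congr 1
        rw [ofReal_mul]
        linear_combination hexact
    _ ≤ C * x ^ (-(1 / 2) : ℝ) + 8 * (x ^ (-2 : ℝ) / (|t| + 2)) := by
        refine (norm_sub_le _ _).trans (add_le_add ?_ htriv)
        rw [norm_neg, norm_mul, norm_real, Real.norm_of_nonneg (by positivity)]
        gcongr
        exact hC t
    _ ≤ max C 8 * (x ^ (-(1 / 2) : ℝ) + x ^ (-(2 : ℝ)) / (|t| + 2)) := by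
        rw [mul_add]
        gcongr
        exacts [le_max_left _ _, le_max_right _ _]

lemma ZetaNontrivZero.re_eq_half {ρ : ℂ} (hρ : ZetaNontrivZero ρ) (hRH : RiemannHypothesis) :
    ρ.re = 1 / 2 := by
  refine hRH ρ hρ.1 ?_ ?_
  · rintro ⟨n, rfl⟩
    have := hρ.2.1
    norm_num at this
    linarith
  · rintro rfl
    exact lt_irrefl _ hρ.2.2

lemma tsum_zeros_eq_tsum_ordinates (hRH : RiemannHypothesis) (hx : 0 < x) (t : ℝ) :
    ∑' ρ : {ρ : ℂ // ZetaNontrivZero ρ},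
        zetaMult ρ * montgomeryKernel t ρ * (x : ℂ) ^ ((ρ : ℂ) - I * t) =
      2 * (x : ℂ) ^ (1 / 2 - I * t) * ∑' ρ : {ρ : ℂ // ZetaNontrivZero ρ},
        zetaMult ρ * cexp (I * (ρ : ℂ).im * Real.log x) / (1 + (t - (ρ : ℂ).im) ^ 2 : ℝ) := by
  rw [← tsum_mul_left]
  refine tsum_congr fun ρ ↦ ?_
  have hre := ρ.2.re_eq_half hRH
  have hρ : (ρ : ℂ) = 1 / 2 + I * (ρ : ℂ).im := by apply Complex.ext <;> simp [hre]
  have hpow : (x : ℂ) ^ ((ρ : ℂ) - I * t) =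
      (x : ℂ) ^ (1 / 2 - I * t) * cexp (I * (ρ : ℂ).im * Real.log x) := by
    rw [ofReal_cpow_eq_exp hx, ofReal_cpow_eq_exp hx, ← Complex.exp_add]
    congr 1
    linear_combination (Real.log x : ℂ) * hρ
  rw [montgomeryKernel_of_re_eq_half t hre, hpow]
  ring

end ExplicitFormula

/-- Montgomery's explicit formula: assuming RH, for `x ≥ 1` and `t` real,
`2 x^{1/2-it} ∑_γ x^{iγ}/(1+(t-γ)²) = -∑_n Λ(n) a_n(x) n^{-it}
  + 2x^{1-it}/((1/2+it)(3/2-it)) + x^{-1/2}(log(|t|+2)+O(1)) + O(x^{-2}/(|t|+2))`,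
the sum over the ordinates of the non-trivial zeros counted with multiplicity. -/
theorem montgomery_explicit_formula (hRH : RiemannHypothesis) :
    ∃ C : ℝ, 0 < C ∧ ∀ x : ℝ, 1 ≤ x → ∀ t : ℝ,
      ‖2 * (x : ℂ) ^ ((1 / 2 : ℂ) - Complex.I * (t : ℂ)) *
          (∑' ρ : {ρ : ℂ // ZetaNontrivZero ρ},
            (zetaMult (ρ : ℂ) : ℂ) *
              Complex.exp (Complex.I * (((ρ : ℂ).im : ℝ) : ℂ) * (Real.log x : ℂ)) /
              (((1 + (t - (ρ : ℂ).im) ^ 2 : ℝ)) : ℂ))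
        + (∑' n : ℕ, ((ArithmeticFunction.vonMangoldt n * aWeight n x : ℝ) : ℂ) *
            (n : ℂ) ^ (-(Complex.I * (t : ℂ))))
        - 2 * (x : ℂ) ^ ((1 : ℂ) - Complex.I * (t : ℂ)) /
            ((1 / 2 + Complex.I * (t : ℂ)) * (3 / 2 - Complex.I * (t : ℂ)))
        - ((x ^ (-(1 / 2) : ℝ) * Real.log (|t| + 2) : ℝ) : ℂ)‖
      ≤ C * (x ^ (-(1 / 2) : ℝ) + x ^ (-(2 : ℝ)) / (|t| + 2)) := by
  obtain ⟨C, hC, h⟩ := montgomery_explicit_formula_general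
  exact ⟨C, hC, fun x hx t ↦
    tsum_zeros_eq_tsum_ordinates hRH (zero_lt_one.trans_le hx) t ▸ h x hx t⟩
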